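/- arXiv:1802.00067 — 2 statements merged into one kernel-verified Lean document; each statement's English description precedes it below -/
import Mathlib

section
/- Let n ≥ 2 be fixed, c > 0, and let (X_d)_{d≥1} be a unitarily invariant sequence of random positive semidefinite matrices X_d ∈ M_n(ℂ) ⊗ M_d(ℂ) converging strongly to the Marčenko–Pastur distribution MP_c. If c < (n−1)²/(4n), then almost surely, for all sufficiently large d, X_d ∉ SEP_{n,d}; in particular lim_{d→∞} P(X_d ∈ SEP_{n,d}) = 0. -/
open MeasureTheory Filter Topology Polynomial Matrix Kronecker
open scoped ComplexOrder

noncomputable section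

/-- Measurable space structure on matrices (entrywise). -/
instance matMS (m n : Type*) : MeasurableSpace (Matrix m n ℂ) :=
  inferInstanceAs (MeasurableSpace (m → n → ℂ))

/-- The ℓ²→ℓ² operator norm of a complex square matrix. -/
def opNorm {N : Type*} [Fintype N] [DecidableEq N] (X : Matrix N N ℂ) : ℝ :=
  ‖Matrix.toEuclideanCLM (𝕜 := ℂ) (n := N) X‖

/-- Application of a real polynomial to a complex square matrix. -/
def polyApply {N : Type*} [Fintype N] [DecidableEq N] (P : Polynomial ℝ)
    (X : Matrix N N ℂ) : Matrix N N ℂ :=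
  Polynomial.aeval X (P.map (algebraMap ℝ ℂ))

/-- The (topological) support of a measure on ℝ: points all of whose open
neighbourhoods have positive measure. -/
def msupport (μ : Measure ℝ) : Set ℝ :=
  {x | ∀ U : Set ℝ, IsOpen U → x ∈ U → 0 < μ U}

/-- Strong convergence of a sequence of random matrices `X d ∈ M_n(ℂ) ⊗ M_d(ℂ)`
towards a compactly supported probability measure `μ`: almost surely, for every
real polynomial `P`, the normalized traces of `P(X d)` converge to `∫ P dμ` and the
operator norms of `P(X d)` converge to `sup {|P(x)| : x ∈ supp μ}`. -/
def StrongConv {Ω : Type*} [MeasurableSpace Ω] (ℙ : Measure Ω) (n : ℕ)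
    (X : (d : ℕ) → Ω → Matrix (Fin n × Fin d) (Fin n × Fin d) ℂ)
    (μ : Measure ℝ) : Prop :=
  ∀ᵐ ω ∂ℙ, ∀ P : Polynomial ℝ,
    Tendsto (fun d : ℕ => ((n : ℂ) * (d : ℂ))⁻¹ * (polyApply P (X d ω)).trace) atTop
      (𝓝 ((∫ x, P.eval x ∂μ : ℝ) : ℂ)) ∧
    Tendsto (fun d : ℕ => opNorm (polyApply P (X d ω))) atTop
      (𝓝 (sSup ((fun x => |P.eval x|) '' msupport μ)))

/-- Unitary invariance of a sequence of random matrices: for every `d` and every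
unitary `U`, the random matrix `U (X d) U*` has the same distribution as `X d`. -/
def UnitInv {Ω : Type*} [MeasurableSpace Ω] (ℙ : Measure Ω) (n : ℕ)
    (X : (d : ℕ) → Ω → Matrix (Fin n × Fin d) (Fin n × Fin d) ℂ) : Prop :=
  ∀ d : ℕ, ∀ U : Matrix (Fin n × Fin d) (Fin n × Fin d) ℂ,
    U ∈ unitary (Matrix (Fin n × Fin d) (Fin n × Fin d) ℂ) →
    Measure.map (fun ω => U * X d ω * star U) ℙ = Measure.map (X d) ℙ

/-- The separable cone `SEP_{n,d}`. -/
def SEP (n d : ℕ) : Set (Matrix (Fin n × Fin d) (Fin n × Fin d) ℂ) :=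
  {X | ∃ (k : ℕ) (A : Fin k → Matrix (Fin n) (Fin n) ℂ)
      (B : Fin k → Matrix (Fin d) (Fin d) ℂ),
    (∀ i, (A i).PosSemidef) ∧ (∀ i, (B i).PosSemidef) ∧ X = ∑ i, A i ⊗ₖ B i}

/-- The partial transpose on `M_n(ℂ) ⊗ M_d(ℂ)`: transposition of the first factor. -/
def ptrans {n d : ℕ} (X : Matrix (Fin n × Fin d) (Fin n × Fin d) ℂ) :
    Matrix (Fin n × Fin d) (Fin n × Fin d) ℂ :=
  fun p q => X (q.1, p.2) (p.1, q.2)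

/-- The PPT cone `PPT_{n,d}`: positive semidefinite matrices with positive
semidefinite partial transpose. -/
def PPT (n d : ℕ) : Set (Matrix (Fin n × Fin d) (Fin n × Fin d) ℂ) :=
  {X | X.PosSemidef ∧ (ptrans X).PosSemidef}

/-- The Marčenko–Pastur distribution of parameter `c > 0`:
`max(1−c,0)·δ₀ + (√((b−x)(x−a))/(2πx))·1_{(a,b)}(x) dx`,
with `a = (1−√c)²` and `b = (1+√c)²`. -/
def MP (c : ℝ) : Measure ℝ :=
  ENNReal.ofReal (max (1 - c) 0) • Measure.dirac (0 : ℝ) +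
    MeasureTheory.volume.withDensity (fun x => ENNReal.ofReal
      (Set.indicator (Set.Ioo ((1 - Real.sqrt c) ^ 2) ((1 + Real.sqrt c) ^ 2))
        (fun y => Real.sqrt (((1 + Real.sqrt c) ^ 2 - y) * (y - (1 - Real.sqrt c) ^ 2))
          / (2 * Real.pi * y)) x))

section QuadraticForm

variable {ι : Type*} [Fintype ι]

/-- The real quadratic form `v ↦ Re ⟨v, A v⟩`. -/
def qf (A : Matrix ι ι ℂ) (v : ι → ℂ) : ℝ := (star v ⬝ᵥ A *ᵥ v).re

/-- The squared Euclidean norm. -/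
def nsq (v : ι → ℂ) : ℝ := (star v ⬝ᵥ v).re

lemma nsq_eq_sum (v : ι → ℂ) : nsq v = ∑ i, ‖v i‖ ^ 2 := by
  simp [nsq, dotProduct, Complex.sq_norm, Complex.normSq_apply]

lemma nsq_nonneg (v : ι → ℂ) : 0 ≤ nsq v := by
  rw [nsq_eq_sum]; positivity

lemma qf_add (A B : Matrix ι ι ℂ) (v : ι → ℂ) : qf (A + B) v = qf A v + qf B v := by
  simp [qf, Matrix.add_mulVec, dotProduct_add]

lemma qf_sub (A B : Matrix ι ι ℂ) (v : ι → ℂ) : qf (A - B) v = qf A v - qf B v := by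
  simp [qf, Matrix.sub_mulVec, dotProduct_sub]

lemma Matrix.PosSemidef.qf_nonneg {A : Matrix ι ι ℂ} (hA : A.PosSemidef) (v : ι → ℂ) :
    0 ≤ qf A v := hA.re_dotProduct_nonneg v

lemma posSemidef_of_qf_nonneg {A : Matrix ι ι ℂ} (hA : A.IsHermitian)
    (h : ∀ v, 0 ≤ qf A v) : A.PosSemidef := by
  refine PosSemidef.of_dotProduct_mulVec_nonneg hA fun v => ?_
  rw [Complex.nonneg_iff]
  refine ⟨h v, ?_⟩
  have := hA.im_star_dotProduct_mulVec_self v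
  simpa using this.symm

end QuadraticForm

section SpectralCalculus

variable {ι : Type*} [Fintype ι] [DecidableEq ι]

lemma qf_smul_one (r : ℝ) (v : ι → ℂ) :
    qf ((r : ℂ) • (1 : Matrix ι ι ℂ)) v = r * nsq v := by
  simp [qf, nsq, Matrix.smul_mulVec, dotProduct_smul]

/-- Apply a real function to the eigenvalues of a Hermitian matrix. -/
def specFun {B : Matrix ι ι ℂ} (hB : B.IsHermitian) (f : ℝ → ℝ) : Matrix ι ι ℂ :=
  (hB.eigenvectorUnitary : Matrix ι ι ℂ) *
    diagonal (fun i => ((f (hB.eigenvalues i) : ℝ) : ℂ)) *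
    star (hB.eigenvectorUnitary : Matrix ι ι ℂ)

variable {B : Matrix ι ι ℂ} (hB : B.IsHermitian)

lemma specFun_id : specFun hB (fun x => x) = B := by
  conv_rhs => rw [hB.spectral_theorem]
  rfl

lemma specFun_mul (f g : ℝ → ℝ) :
    specFun hB f * specFun hB g = specFun hB (fun x => f x * g x) := by
  have h : star (hB.eigenvectorUnitary : Matrix ι ι ℂ) * hB.eigenvectorUnitary = 1 :=
    Unitary.coe_star_mul_self _
  simp only [specFun]
  rw [show ∀ a b c d e f : Matrix ι ι ℂ, (a * b * c) * (d * e * f) = a * b * (c * d) * e * f by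
    intros; simp only [Matrix.mul_assoc], h, Matrix.mul_one, Matrix.mul_assoc _ (diagonal _)
    (diagonal _), diagonal_mul_diagonal]
  simp

lemma specFun_one : specFun hB (fun _ => 1) = 1 := by
  simp [specFun]

lemma specFun_add (f g : ℝ → ℝ) :
    specFun hB f + specFun hB g = specFun hB (fun x => f x + g x) := by
  simp only [specFun]
  rw [← Matrix.add_mul, ← Matrix.mul_add, diagonal_add]
  simp

lemma specFun_smul (r : ℝ) (f : ℝ → ℝ) :
    (r : ℂ) • specFun hB f = specFun hB (fun x => r * f x) := by
  simp only [specFun]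
  rw [← Matrix.smul_mul, ← Matrix.mul_smul, ← diagonal_smul]
  congr 3
  ext i
  simp

lemma specFun_congr {f g : ℝ → ℝ} (h : ∀ i, f (hB.eigenvalues i) = g (hB.eigenvalues i)) :
    specFun hB f = specFun hB g := by
  simp only [specFun, h]

lemma trace_specFun (f : ℝ → ℝ) :
    (specFun hB f).trace = ((∑ i, f (hB.eigenvalues i) : ℝ) : ℂ) := by
  rw [specFun, Matrix.trace_mul_comm, ← Matrix.mul_assoc, Unitary.coe_star_mul_self,
    Matrix.one_mul, Matrix.trace_diagonal]
  push_cast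
  rfl

lemma posSemidef_specFun {f : ℝ → ℝ} (h : ∀ i, 0 ≤ f (hB.eigenvalues i)) :
    (specFun hB f).PosSemidef := by
  have : (diagonal (fun i => ((f (hB.eigenvalues i) : ℝ) : ℂ))).PosSemidef :=
    PosSemidef.diagonal fun i => by simpa using h i
  exact this.mul_mul_conjTranspose_same _

lemma isHermitian_specFun (f : ℝ → ℝ) : (specFun hB f).IsHermitian := by
  have h : (diagonal (fun i => ((f (hB.eigenvalues i) : ℝ) : ℂ))).IsHermitian :=
    isHermitian_diagonal_of_self_adjoint _ (by ext i; simp)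
  exact isHermitian_mul_mul_conjTranspose _ h

lemma specFun_sq : specFun hB (fun x => x ^ 2) = B * B := by
  conv_rhs => rw [← specFun_id hB]
  rw [specFun_mul]
  simp only [pow_two]

lemma qf_specFun_le {f : ℝ → ℝ} {r : ℝ} (h : ∀ i, f (hB.eigenvalues i) ≤ r) (v : ι → ℂ) :
    qf (specFun hB f) v ≤ r * nsq v := by
  have h1 : (specFun hB (fun x => r * 1 + (-1) * f x)).PosSemidef :=
    posSemidef_specFun hB fun i => by linarith [h i]
  have h2 := h1.qf_nonneg v
  rw [← specFun_add, ← specFun_smul, ← specFun_smul, specFun_one, qf_add, qf_smul_one] at h2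
  simp only [qf, Complex.ofReal_neg, Complex.ofReal_one,
    neg_smul, one_smul, Matrix.neg_mulVec, dotProduct_neg, Complex.neg_re] at h2 ⊢
  linarith

lemma eigenvalues_le_of_qf_le {r : ℝ} (h : ∀ v, qf B v ≤ r * nsq v) (i : ι) :
    hB.eigenvalues i ≤ r := by
  have h1 := hB.eigenvalues_eq i
  have h2 := h (hB.eigenvectorBasis i)
  have h3 : nsq (hB.eigenvectorBasis i : ι → ℂ) = 1 := by
    rw [nsq_eq_sum, ← EuclideanSpace.norm_sq_eq, hB.eigenvectorBasis.norm_eq_one]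
    norm_num
  rw [h3, mul_one] at h2
  rw [h1]
  exact h2

end SpectralCalculus

section Compression

variable {ι : Type*} [Fintype ι]

lemma norm_star_dotProduct_sq_le (x y : ι → ℂ) : ‖star x ⬝ᵥ y‖ ^ 2 ≤ nsq x * nsq y := by
  have h := norm_inner_le_norm (𝕜 := ℂ) (WithLp.toLp 2 x) (WithLp.toLp 2 y)
  have hx : ∀ x : ι → ℂ, nsq x = ‖WithLp.toLp 2 x‖ ^ 2 := fun x => by
    rw [nsq_eq_sum, EuclideanSpace.norm_sq_eq]
  rw [hx, hx, ← mul_pow]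
  refine pow_le_pow_left₀ (norm_nonneg _) (le_of_eq_of_le ?_ h) 2
  rw [EuclideanSpace.inner_toLp_toLp, dotProduct_comm]

lemma star_dotProduct_conjTranspose_mul (R : Matrix ι ι ℂ) (x y : ι → ℂ) :
    star x ⬝ᵥ (Rᴴ * R) *ᵥ y = star (R *ᵥ x) ⬝ᵥ R *ᵥ y := by
  rw [← Matrix.mulVec_mulVec, Matrix.dotProduct_mulVec, Matrix.star_mulVec]

/-- The Cauchy–Schwarz inequality for a positive semidefinite form. -/
lemma Matrix.PosSemidef.norm_form_sq_le {B : Matrix ι ι ℂ} (hB : B.PosSemidef)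
    (x y : ι → ℂ) : ‖star x ⬝ᵥ B *ᵥ y‖ ^ 2 ≤ qf B x * qf B y := by
  classical
  obtain ⟨R, rfl⟩ : ∃ R : Matrix ι ι ℂ, B = Rᴴ * R := by
    refine ⟨specFun hB.1 Real.sqrt, ?_⟩
    rw [(isHermitian_specFun hB.1 _).eq, specFun_mul]
    conv_lhs => rw [← specFun_id hB.1]
    exact specFun_congr _ fun i => (Real.mul_self_sqrt (hB.eigenvalues_nonneg i)).symm
  have h := norm_star_dotProduct_sq_le (R *ᵥ x) (R *ᵥ y)
  simpa only [qf, nsq, star_dotProduct_conjTranspose_mul] using h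

lemma Matrix.IsHermitian.star_dotProduct_mulVec {B : Matrix ι ι ℂ} (hB : B.IsHermitian)
    (x y : ι → ℂ) : star (B *ᵥ x) ⬝ᵥ y = star x ⬝ᵥ B *ᵥ y := by
  rw [Matrix.star_mulVec, hB.eq, Matrix.dotProduct_mulVec]

lemma Matrix.IsHermitian.ofReal_qf {B : Matrix ι ι ℂ} (hB : B.IsHermitian) (x : ι → ℂ) :
    ((qf B x : ℝ) : ℂ) = star x ⬝ᵥ B *ᵥ x := by
  apply Complex.ext
  · simp [qf]
  · have := hB.im_star_dotProduct_mulVec_self x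
    simpa using this.symm

lemma ofReal_nsq (x : ι → ℂ) : ((nsq x : ℝ) : ℂ) = star x ⬝ᵥ x := by
  classical
  have := (Matrix.isHermitian_one (n := ι) (α := ℂ)).ofReal_qf x
  simpa [qf, nsq] using this

lemma Matrix.PosSemidef.mulVec_eq_zero_of_qf {B : Matrix ι ι ℂ} (hB : B.PosSemidef)
    {x : ι → ℂ} (h : qf B x = 0) : B *ᵥ x = 0 := by
  have h1 := hB.norm_form_sq_le (B *ᵥ x) x
  rw [h, mul_zero] at h1
  have h2 : star (B *ᵥ x) ⬝ᵥ B *ᵥ x = 0 := by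
    have := pow_eq_zero_iff (two_ne_zero) |>.mp (le_antisymm h1 (by positivity))
    exact norm_eq_zero.mp this
  exact dotProduct_star_self_eq_zero.mp h2

/-- The inverse of the compression to `w⊥` of the matrix whose inverse is `B`. -/
def compress (B : Matrix ι ι ℂ) (w : ι → ℂ) : Matrix ι ι ℂ :=
  B - (((qf B w)⁻¹ : ℝ) : ℂ) • vecMulVec (B *ᵥ w) (star (B *ᵥ w))

lemma qf_vecMulVec (u y : ι → ℂ) : qf (vecMulVec u (star u)) y = ‖star y ⬝ᵥ u‖ ^ 2 := by
  have h : star y ⬝ᵥ (vecMulVec u (star u) *ᵥ y) = (star y ⬝ᵥ u) * star (star y ⬝ᵥ u) := by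
    rw [Matrix.vecMulVec_mulVec, dotProduct_smul, ← Matrix.star_dotProduct]
    simp [mul_comm]
  rw [qf, h, Complex.star_def, Complex.mul_conj, Complex.ofReal_re, Complex.normSq_eq_norm_sq]

lemma qf_ofReal_smul (r : ℝ) (A : Matrix ι ι ℂ) (y : ι → ℂ) :
    qf ((r : ℂ) • A) y = r * qf A y := by
  simp [qf, Matrix.smul_mulVec, dotProduct_smul]

lemma qf_compress_le {B : Matrix ι ι ℂ} (hB : B.PosSemidef) (w : ι → ℂ)
    (y : ι → ℂ) : qf (compress B w) y ≤ qf B y := by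
  rw [compress, qf_sub, qf_ofReal_smul, qf_vecMulVec]
  have := inv_nonneg.mpr (hB.qf_nonneg w)
  have : 0 ≤ (qf B w)⁻¹ * ‖star y ⬝ᵥ B *ᵥ w‖ ^ 2 := by positivity
  linarith

lemma posSemidef_compress {B : Matrix ι ι ℂ} (hB : B.PosSemidef) (w : ι → ℂ) :
    (compress B w).PosSemidef := by
  refine posSemidef_of_qf_nonneg ?_ fun y => ?_
  · refine hB.1.sub ?_
    rw [Matrix.IsHermitian, Matrix.conjTranspose_smul, Matrix.conjTranspose_vecMulVec]
    simp
  · rw [compress, qf_sub, qf_ofReal_smul, qf_vecMulVec]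
    have h := hB.norm_form_sq_le y w
    rcases (hB.qf_nonneg w).eq_or_lt with h0 | h0
    · rw [← h0]; simpa using hB.qf_nonneg y
    · rw [sub_nonneg, inv_mul_le_iff₀ h0]
      linarith

lemma trace_compress_re (B : Matrix ι ι ℂ) (w : ι → ℂ) :
    (compress B w).trace.re = B.trace.re - nsq (B *ᵥ w) / qf B w := by
  rw [compress, Matrix.trace_sub, Matrix.trace_smul, Matrix.trace_vecMulVec, dotProduct_comm,
    ← ofReal_nsq, smul_eq_mul, ← Complex.ofReal_mul, Complex.sub_re, Complex.ofReal_re]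
  ring

lemma trace_compress_sq_le {B : Matrix ι ι ℂ} (hB : B.PosSemidef) (w : ι → ℂ) :
    (compress B w * compress B w).trace.re ≤ (B * B).trace.re := by
  set u := B *ᵥ w with hu
  set r := (qf B w)⁻¹ with hr
  have hr0 : 0 ≤ r := inv_nonneg.mpr (hB.qf_nonneg w)
  have key : (compress B w * compress B w).trace.re =
      (B * B).trace.re - 2 * r * qf B u + r ^ 2 * nsq u ^ 2 := by
    have h1 : (B * vecMulVec u (star u)).trace = ((qf B u : ℝ) : ℂ) := by
      rw [Matrix.mul_vecMulVec, Matrix.trace_vecMulVec, dotProduct_comm, hB.1.ofReal_qf]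
    have h2 : (vecMulVec u (star u) * vecMulVec u (star u)).trace = ((nsq u ^ 2 : ℝ) : ℂ) := by
      rw [Matrix.vecMulVec_mul_vecMulVec, Matrix.trace_vecMulVec, dotProduct_smul,
        dotProduct_comm u, ← ofReal_nsq]
      simp [pow_two]
    have h3 : (vecMulVec u (star u) * B).trace = ((qf B u : ℝ) : ℂ) := by
      rw [Matrix.trace_mul_comm, h1]
    rw [compress, ← hu, ← hr]
    simp only [Matrix.sub_mul, Matrix.mul_sub, Matrix.trace_sub, Matrix.smul_mul, Matrix.mul_smul,
      Matrix.trace_smul, h1, h2, h3, smul_eq_mul, Complex.sub_re, Complex.re_ofReal_mul,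
      Complex.ofReal_re]
    ring
  have h4 : nsq u ^ 2 ≤ qf B u * qf B w := by
    have := hB.norm_form_sq_le u w
    rw [← hu, ← ofReal_nsq, Complex.norm_real, Real.norm_eq_abs, sq_abs] at this
    exact this
  have h5 : r ^ 2 * nsq u ^ 2 ≤ r * qf B u := by
    rcases (hB.qf_nonneg w).eq_or_lt with h0 | h0
    · rw [hr, ← h0]; simp
    · calc r ^ 2 * nsq u ^ 2 ≤ r ^ 2 * (qf B u * qf B w) := by gcongr
        _ = r * qf B u := by rw [hr]; field_simp
  have h6 : 0 ≤ r * qf B u := mul_nonneg hr0 (hB.qf_nonneg u)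
  rw [key]
  linarith

lemma compress_mulVec {B : Matrix ι ι ℂ} (hB : B.PosSemidef) (w : ι → ℂ)
    {x v : ι → ℂ} (h : B *ᵥ x = v) (hv : star w ⬝ᵥ v = 0) :
    compress B w *ᵥ x = v := by
  rw [compress, Matrix.sub_mulVec, h, Matrix.smul_mulVec, Matrix.vecMulVec_mulVec,
    hB.1.star_dotProduct_mulVec, h, hv]
  simp

end Compression

section Shift

lemma shift_truncate_scalar {L δ b : ℝ} (hL : 0 < L) (hδ : 0 ≤ δ) (hδL : δ * L < 1)
    (hb : 0 ≤ b) (hbL : b ≤ L) :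
    ∃ f t : ℝ, 0 ≤ f ∧ f ≤ L ∧ 0 ≤ t ∧ f * (1 + (t - δ) * b) = b ∧
      f + L ^ 2 * t ≤ b + δ / (1 - δ * L) * b ^ 2 := by
  have hδb : δ * b ≤ δ * L := by gcongr
  have h1 : 0 < 1 - δ * b := by linarith
  have h2 : 0 < 1 - δ * L := by linarith
  rcases le_or_gt (b / (1 - δ * b)) L with h | h
  · refine ⟨b / (1 - δ * b), 0, by positivity, h, le_rfl, ?_, ?_⟩
    · rw [zero_sub, neg_mul, ← sub_eq_add_neg, div_mul_cancel₀ _ h1.ne']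
    · have h3 : b / (1 - δ * b) = b + δ / (1 - δ * b) * b ^ 2 := by
        have := h1.ne'
        rw [div_mul_eq_mul_div, div_eq_iff this, add_mul, div_mul_cancel₀ _ this]
        ring
      have h4 : δ / (1 - δ * b) ≤ δ / (1 - δ * L) := by gcongr
      have h5 := mul_le_mul_of_nonneg_right h4 (sq_nonneg b)
      rw [h3]
      linarith
  · have hb0 : 0 < b := hb.lt_of_ne fun h0 => by
      rw [← h0] at h; simp at h; linarith
    rw [lt_div_iff₀ h1] at h
    have ht : 1 / L + δ - 1 / b = (b + δ * L * b - L) / (L * b) := by field_simp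
    refine ⟨L, 1 / L + δ - 1 / b, hL.le, le_rfl, ?_, ?_, ?_⟩
    · rw [ht]
      apply div_nonneg _ (by positivity)
      nlinarith
    · field_simp; ring
    · have h6 : b + δ / (1 - δ * L) * b ^ 2 - (L + L ^ 2 * (1 / L + δ - 1 / b)) =
          (b * (δ * L ^ 2 - (L - b)) ^ 2 + (L - b) ^ 3 * (1 - δ * L)) /
            (L * b * (1 - δ * L)) := by
        field_simp; ring
      have h7 : 0 ≤ L - b := by linarith
      have h8 : 0 ≤ (b * (δ * L ^ 2 - (L - b)) ^ 2 + (L - b) ^ 3 * (1 - δ * L)) /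
            (L * b * (1 - δ * L)) := by positivity
      linarith

/-- Shifting the inverse of `B` by `-δ` and truncating the result at level `1 / L`. -/
lemma exists_shift_truncate {ι : Type*} [Fintype ι] [DecidableEq ι] {B : Matrix ι ι ℂ}
    (hB : B.PosSemidef) {L δ : ℝ} (hL : 0 < L) (hδ : 0 ≤ δ) (hδL : δ * L < 1)
    (hBL : ∀ v, qf B v ≤ L * nsq v) :
    ∃ B' T : Matrix ι ι ℂ, B'.PosSemidef ∧ T.PosSemidef ∧ (∀ v, qf B' v ≤ L * nsq v) ∧
      B'.trace.re + L ^ 2 * T.trace.re ≤ B.trace.re + δ / (1 - δ * L) * (B * B).trace.re ∧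
      B' * (1 + (T - (δ : ℂ) • 1) * B) = B := by
  have hev := eigenvalues_le_of_qf_le hB.1 hBL
  choose! f t hf hfL ht hft hsum using fun b (hb : 0 ≤ b ∧ b ≤ L) =>
    shift_truncate_scalar hL hδ hδL hb.1 hb.2
  have hm : ∀ i, 0 ≤ hB.1.eigenvalues i ∧ hB.1.eigenvalues i ≤ L :=
    fun i => ⟨hB.eigenvalues_nonneg i, hev i⟩
  refine ⟨specFun hB.1 f, specFun hB.1 t, posSemidef_specFun _ fun i => hf _ (hm i),
    posSemidef_specFun _ fun i => ht _ (hm i), qf_specFun_le _ fun i => hfL _ (hm i), ?_, ?_⟩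
  · have h1 : B.trace = ((∑ i, hB.1.eigenvalues i : ℝ) : ℂ) := by
      conv_lhs => rw [← specFun_id hB.1]
      rw [trace_specFun]
    rw [trace_specFun, trace_specFun, ← specFun_sq hB.1, trace_specFun, h1]
    simp only [Complex.ofReal_re]
    rw [Finset.mul_sum, Finset.mul_sum, ← Finset.sum_add_distrib, ← Finset.sum_add_distrib]
    exact Finset.sum_le_sum fun i _ => hsum _ (hm i)
  · have h2 : specFun hB.1 t - (δ : ℂ) • 1 = specFun hB.1 fun x => t x + (-δ) * 1 := by
      rw [← specFun_add, ← specFun_smul, specFun_one]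
      push_cast
      rw [neg_smul, sub_eq_add_neg]
    rw [h2]
    conv_lhs => enter [2, 2, 2]; rw [← specFun_id hB.1]
    rw [← specFun_one hB.1, specFun_mul, specFun_add, specFun_mul]
    conv_rhs => rw [← specFun_id hB.1]
    refine specFun_congr _ fun i => ?_
    have := hft _ (hm i)
    rw [mul_one, ← sub_eq_add_neg]
    exact this

end Shift

section SignVectors

variable {ι : Type*} [Fintype ι] [DecidableEq ι]

/-- The complex vector attached to a choice of signs. -/
def signVec {ι : Type*} (σ : ι → ℤˣ) : ι → ℂ := fun i => (((σ i : ℤ) : ℝ) : ℂ)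

lemma sum_sign_eq_zero (F : (ι → ℤˣ) → ℝ) (p : ι)
    (h : ∀ σ, F (Pi.mulSingle p (-1) * σ) = -F σ) : ∑ σ, F σ = 0 := by
  have h1 := Equiv.sum_comp (Equiv.mulLeft (Pi.mulSingle p (-1) : ι → ℤˣ)) F
  simp only [Equiv.coe_mulLeft, h, Finset.sum_neg_distrib] at h1
  linarith

lemma sum_sign_four {i j k l : ι} (hij : i ≠ j) (hkl : k ≠ l) :
    ∑ σ : ι → ℤˣ, (((σ i : ℤ) : ℝ) * ((σ j : ℤ) : ℝ)) * (((σ k : ℤ) : ℝ) * ((σ l : ℤ) : ℝ)) =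
      Fintype.card (ι → ℤˣ) *
        ((if i = k ∧ j = l then 1 else 0) + (if i = l ∧ j = k then 1 else 0)) := by
  have hsq : ∀ u : ℤˣ, ((u : ℤ) : ℝ) * ((u : ℤ) : ℝ) = 1 := fun u => by
    rcases Int.units_eq_one_or u with rfl | rfl <;> norm_num
  by_cases hik : i = k
  · subst hik
    by_cases hjl : j = l
    · subst hjl
      have h : ¬ (i = j ∧ j = i) := fun h => hij h.1
      simp [h, mul_mul_mul_comm, hsq]
    · have h : ¬ (i = l ∧ j = i) := fun h => hij h.2.symm
      rw [if_neg (fun h => hjl h.2), if_neg h, add_zero, mul_zero]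
      refine sum_sign_eq_zero _ j fun σ => ?_
      simp [hij, Ne.symm hjl]
  · by_cases hil : i = l
    · subst hil
      by_cases hjk : j = k
      · subst hjk
        simp only [hik, false_and, if_false, zero_add, and_self, if_true, mul_one]
        rw [Finset.sum_congr rfl (g := fun _ => (1 : ℝ)) fun σ _ => ?_]
        · simp
        · rw [mul_comm ((σ j : ℤ) : ℝ), mul_mul_mul_comm, hsq, hsq, one_mul]
      · rw [if_neg (fun h => hik h.1), if_neg (fun h => hjk h.2), add_zero, mul_zero]
        refine sum_sign_eq_zero _ j fun σ => ?_
        simp [hij, Ne.symm hjk]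
    · rw [if_neg (fun h => hik h.1), if_neg (fun h => hil h.1), add_zero, mul_zero]
      refine sum_sign_eq_zero _ i fun σ => ?_
      simp [hij.symm, Ne.symm hik, Ne.symm hil]

lemma sum_sign_quadratic_sq_le (a : ι → ι → ℝ) (ha : ∀ i, a i i = 0) :
    ∑ σ : ι → ℤˣ, (∑ i, ∑ j, ((σ i : ℤ) : ℝ) * ((σ j : ℤ) : ℝ) * a i j) ^ 2 ≤
      2 * Fintype.card (ι → ℤˣ) * ∑ i, ∑ j, a i j ^ 2 := by
  set K : ℝ := (Fintype.card (ι → ℤˣ) : ℝ)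
  have hterm : ∀ i j k l, ∑ σ : ι → ℤˣ, (((σ i : ℤ) : ℝ) * ((σ j : ℤ) : ℝ) * a i j) *
      (((σ k : ℤ) : ℝ) * ((σ l : ℤ) : ℝ) * a k l) =
      K * ((if i = k then (if j = l then a i j * a k l else 0) else 0) +
        (if i = l then (if j = k then a i j * a k l else 0) else 0)) := by
    intro i j k l
    by_cases hij : i = j
    · subst hij; simp [ha]
    by_cases hkl : k = l
    · subst hkl; simp [ha]
    have h := sum_sign_four hij hkl
    calc _ = (a i j * a k l) * ∑ σ : ι → ℤˣ, (((σ i : ℤ) : ℝ) * ((σ j : ℤ) : ℝ)) *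
          (((σ k : ℤ) : ℝ) * ((σ l : ℤ) : ℝ)) := by
          rw [Finset.mul_sum]; exact Finset.sum_congr rfl fun σ _ => by ring
      _ = _ := by
        rw [h]
        simp only [ite_and, K]
        split_ifs <;> ring
  have hrow : ∀ i j, ∑ k, ∑ l, ∑ σ : ι → ℤˣ, (((σ i : ℤ) : ℝ) * ((σ j : ℤ) : ℝ) * a i j) *
      (((σ k : ℤ) : ℝ) * ((σ l : ℤ) : ℝ) * a k l) = K * (a i j * a i j + a i j * a j i) := by
    intro i j
    simp only [hterm, ← Finset.mul_sum, Finset.sum_add_distrib]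
    congr 2
    · rw [Finset.sum_eq_single i (fun k _ hk => by simp [hk.symm]) (by simp)]
      simp
    · rw [Finset.sum_eq_single j (fun k _ hk => by simp [hk.symm]) (by simp)]
      simp
  have hexp : ∑ σ : ι → ℤˣ, (∑ i, ∑ j, ((σ i : ℤ) : ℝ) * ((σ j : ℤ) : ℝ) * a i j) ^ 2 =
      ∑ i, ∑ j, ∑ k, ∑ l, ∑ σ : ι → ℤˣ, (((σ i : ℤ) : ℝ) * ((σ j : ℤ) : ℝ) * a i j) *
      (((σ k : ℤ) : ℝ) * ((σ l : ℤ) : ℝ) * a k l) := by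
    simp only [pow_two, Finset.sum_mul]
    rw [Finset.sum_comm]
    refine Finset.sum_congr rfl fun i _ => ?_
    rw [Finset.sum_comm]
    refine Finset.sum_congr rfl fun j _ => ?_
    simp only [Finset.mul_sum]
    rw [Finset.sum_comm]
    exact Finset.sum_congr rfl fun k _ => Finset.sum_comm
  have hswap : ∑ i, ∑ j, a j i ^ 2 = ∑ i, ∑ j, a i j ^ 2 := Finset.sum_comm
  rw [hexp]
  calc _ = ∑ i, ∑ j, K * (a i j * a i j + a i j * a j i) :=
        Finset.sum_congr rfl fun i _ => Finset.sum_congr rfl fun j _ => hrow i j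
    _ ≤ ∑ i, ∑ j, K * (3 / 2 * a i j ^ 2 + 1 / 2 * a j i ^ 2) := by
        refine Finset.sum_le_sum fun i _ => Finset.sum_le_sum fun j _ => ?_
        refine mul_le_mul_of_nonneg_left ?_ (Nat.cast_nonneg _)
        nlinarith [sq_nonneg (a i j - a j i)]
    _ = 2 * K * ∑ i, ∑ j, a i j ^ 2 := by
        simp only [← Finset.mul_sum, Finset.sum_add_distrib, hswap]
        ring

lemma qf_signVec {ι : Type*} [Fintype ι] (C : Matrix ι ι ℂ) (σ : ι → ℤˣ) :
    qf C (signVec σ) = ∑ i, ∑ j, ((σ i : ℤ) : ℝ) * ((σ j : ℤ) : ℝ) * (C i j).re := by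
  simp only [qf, dotProduct, mulVec, Complex.re_sum, Finset.mul_sum]
  refine Finset.sum_congr rfl fun i _ => Finset.sum_congr rfl fun j _ => ?_
  simp [signVec]
  ring

lemma trace_mul_self_re {ι : Type*} [Fintype ι] {C : Matrix ι ι ℂ} (hC : C.IsHermitian) :
    (C * C).trace.re = ∑ i, ∑ j, ‖C i j‖ ^ 2 := by
  simp only [Matrix.trace, Matrix.diag, Matrix.mul_apply, Complex.re_sum]
  refine Finset.sum_congr rfl fun i _ => Finset.sum_congr rfl fun j _ => ?_
  rw [← hC.apply i j, Complex.sq_norm, Complex.star_def, Complex.normSq_conj,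
    ← Complex.normSq_eq_conj_mul_self, Complex.ofReal_re]

/-- Chebyshev's inequality for a quadratic form evaluated at uniformly random signs. -/
lemma card_qf_signVec_nonpos_le {C : Matrix ι ι ℂ} (hC : C.IsHermitian) {τ : ℝ} (hτ : 0 ≤ τ)
    (hτC : τ ≤ C.trace.re) :
    ((Finset.univ.filter fun σ : ι → ℤˣ => qf C (signVec σ) ≤ 0).card : ℝ) * τ ^ 2 ≤
      2 * Fintype.card (ι → ℤˣ) * (C * C).trace.re := by
  set a : ι → ι → ℝ := fun i j => if i = j then 0 else (C i j).re with ha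
  have hq : ∀ σ : ι → ℤˣ, ∑ i, ∑ j, ((σ i : ℤ) : ℝ) * ((σ j : ℤ) : ℝ) * a i j =
      qf C (signVec σ) - C.trace.re := by
    intro σ
    have hsq : ∀ u : ℤˣ, ((u : ℤ) : ℝ) * ((u : ℤ) : ℝ) = 1 := fun u => by
      rcases Int.units_eq_one_or u with rfl | rfl <;> norm_num
    rw [qf_signVec, Matrix.trace, Complex.re_sum, ← Finset.sum_sub_distrib]
    refine Finset.sum_congr rfl fun i _ => ?_
    rw [← Finset.add_sum_erase _ _ (Finset.mem_univ i),
      ← Finset.add_sum_erase _ (fun j => ((σ i : ℤ) : ℝ) * ((σ j : ℤ) : ℝ) * (C i j).re)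
        (Finset.mem_univ i)]
    simp only [ha, if_true, mul_zero, zero_add, hsq, one_mul, Matrix.diag, add_sub_cancel_left]
    refine Finset.sum_congr rfl fun j hj => ?_
    rw [if_neg (Finset.ne_of_mem_erase hj).symm]
  have hvar := sum_sign_quadratic_sq_le a (fun i => by simp [ha])
  simp only [hq] at hvar
  have hle : ∑ i, ∑ j, a i j ^ 2 ≤ (C * C).trace.re := by
    rw [trace_mul_self_re hC]
    refine Finset.sum_le_sum fun i _ => Finset.sum_le_sum fun j _ => ?_
    simp only [ha]
    split_ifs
    · simp
    · rw [Complex.sq_norm, Complex.normSq_apply]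
      nlinarith [sq_nonneg (C i j).im]
  calc ((Finset.univ.filter fun σ : ι → ℤˣ => qf C (signVec σ) ≤ 0).card : ℝ) * τ ^ 2
      = ∑ σ ∈ Finset.univ.filter fun σ : ι → ℤˣ => qf C (signVec σ) ≤ 0, τ ^ 2 := by
        rw [Finset.sum_const, nsmul_eq_mul]
    _ ≤ ∑ σ ∈ Finset.univ.filter fun σ : ι → ℤˣ => qf C (signVec σ) ≤ 0,
          (qf C (signVec σ) - C.trace.re) ^ 2 := by
        refine Finset.sum_le_sum fun σ hσ => ?_
        have := (Finset.mem_filter.mp hσ).2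
        nlinarith
    _ ≤ ∑ σ : ι → ℤˣ, (qf C (signVec σ) - C.trace.re) ^ 2 :=
        Finset.sum_le_sum_of_subset_of_nonneg (Finset.filter_subset _ _)
          fun _ _ _ => sq_nonneg _
    _ ≤ _ := hvar.trans (by gcongr)

end SignVectors

section Recursion

variable {ι : Type*} [Fintype ι] [DecidableEq ι]

lemma qf_mul_self {ι : Type*} [Fintype ι] {B : Matrix ι ι ℂ} (hB : B.IsHermitian) (w : ι → ℂ) :
    qf (B * B) w = nsq (B *ᵥ w) := by
  have := star_dotProduct_conjTranspose_mul B w w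
  rw [hB.eq] at this
  rw [qf, this, nsq]

lemma trace_eq_sum_eigenvalues {B : Matrix ι ι ℂ} (hB : B.IsHermitian) :
    B.trace.re = ∑ i, hB.eigenvalues i := by
  conv_lhs => rw [← specFun_id hB]
  rw [trace_specFun, Complex.ofReal_re]

lemma trace_sq_eq_sum_eigenvalues {B : Matrix ι ι ℂ} (hB : B.IsHermitian) :
    (B * B).trace.re = ∑ i, hB.eigenvalues i ^ 2 := by
  rw [← specFun_sq hB, trace_specFun, Complex.ofReal_re]

lemma trace_re_nonneg {B : Matrix ι ι ℂ} (hB : B.PosSemidef) : 0 ≤ B.trace.re :=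
  (trace_eq_sum_eigenvalues hB.1).symm ▸ Finset.sum_nonneg fun i _ => hB.eigenvalues_nonneg i

/-- The trace gained by compressing `B` along `w` compensates the cost of a shift. -/
def CompensatesShift (B : Matrix ι ι ℂ) (L δ θ : ℝ) (w : ι → ℂ) : Prop :=
  δ / (1 - δ * L) * (B * B).trace.re ≤ θ + nsq (B *ᵥ w) / qf B w

lemma exists_compress_shift {B : Matrix ι ι ℂ} (hB : B.PosSemidef) {L δ θ : ℝ} (hL : 0 < L)
    (hδ : 0 ≤ δ) (hδL : δ * L < 1) (hBL : ∀ v, qf B v ≤ L * nsq v) {w : ι → ℂ}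
    (hw : CompensatesShift B L δ θ w) :
    ∃ B' T : Matrix ι ι ℂ, B'.PosSemidef ∧ T.PosSemidef ∧ (∀ v, qf B' v ≤ L * nsq v) ∧
      B'.trace.re + L ^ 2 * T.trace.re ≤ B.trace.re + θ ∧
      ∀ (Q : Matrix ι ι ℂ) (v : ι → ℂ), B *ᵥ (Q *ᵥ v) = v → star w ⬝ᵥ v = 0 →
        B' *ᵥ ((Q - (δ : ℂ) • 1 + T) *ᵥ v) = v := by
  obtain ⟨B', T, hB', hT, hBL', htr, hmul⟩ := exists_shift_truncate (posSemidef_compress hB w) hL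
    hδ hδL fun v => (qf_compress_le hB w v).trans (hBL v)
  refine ⟨B', T, hB', hT, hBL', ?_, fun Q v hQ hv => ?_⟩
  · have h1 : δ / (1 - δ * L) * (compress B w * compress B w).trace.re ≤
        δ / (1 - δ * L) * (B * B).trace.re :=
      mul_le_mul_of_nonneg_left (trace_compress_sq_le hB w)
        (div_nonneg hδ (by linarith))
    rw [trace_compress_re] at htr
    have := hw
    rw [CompensatesShift] at this
    linarith
  · have h2 := compress_mulVec hB w hQ hv
    have h3 : (Q - (δ : ℂ) • 1 + T) *ᵥ v =
        (1 + (T - (δ : ℂ) • 1) * compress B w) *ᵥ (Q *ᵥ v) := by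
      rw [Matrix.add_mulVec 1, ← Matrix.mulVec_mulVec _ _ (compress B w), h2, Matrix.one_mulVec,
        ← Matrix.add_mulVec]
      congr 1
      abel
    rw [h3, Matrix.mulVec_mulVec, hmul, h2]

lemma exists_compress {ι : Type*} [Fintype ι] {B : Matrix ι ι ℂ} (hB : B.PosSemidef) {L θ : ℝ} (hθ : 0 ≤ θ)
    (hBL : ∀ v, qf B v ≤ L * nsq v) (w : ι → ℂ) :
    ∃ B' T : Matrix ι ι ℂ, B'.PosSemidef ∧ T.PosSemidef ∧ (∀ v, qf B' v ≤ L * nsq v) ∧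
      B'.trace.re + L ^ 2 * T.trace.re ≤ B.trace.re + θ ∧
      ∀ (Q : Matrix ι ι ℂ) (v : ι → ℂ), B *ᵥ (Q *ᵥ v) = v → star w ⬝ᵥ v = 0 →
        B' *ᵥ ((Q + T) *ᵥ v) = v := by
  refine ⟨compress B w, 0, posSemidef_compress hB w, PosSemidef.zero,
    fun v => (qf_compress_le hB w v).trans (hBL v), ?_, fun Q v hQ hv => ?_⟩
  · have h1 := nsq_nonneg (B *ᵥ w)
    have h2 := hB.qf_nonneg w
    have h3 : 0 ≤ nsq (B *ᵥ w) / qf B w := by positivity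
    rw [trace_compress_re]
    simp
    linarith
  · rw [add_zero]
    exact compress_mulVec hB w hQ hv

open Classical in
/-- Few sign vectors fail to compensate the shift. -/
lemma card_not_compensatesShift_le {B : Matrix ι ι ℂ} (hB : B.PosSemidef) {L δ S M ε p : ℝ}
    (hL : 0 < L) (hδ : 0 ≤ δ) (hδL : δ * L < 1) (hε : 0 < ε) (hM : 0 < M) (hp : 0 ≤ p)
    (hS : δ * (S + L) ≤ 1 - ε) (hMp : 2 * L ^ 2 ≤ ε ^ 2 * M * p)
    (hBL : ∀ v, qf B v ≤ L * nsq v) (hBS : B.trace.re ≤ S) :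
    ((Finset.univ.filter fun σ : ι → ℤˣ =>
      ¬ CompensatesShift B L δ (δ * M / (1 - δ * L)) (signVec σ)).card : ℝ) ≤
      p * Fintype.card (ι → ℤˣ) := by
  set Ψ := (B * B).trace.re with hΨ
  have h1L : 0 < 1 - δ * L := by linarith
  set θ := δ * M / (1 - δ * L) with hθ
  have hθ0 : 0 ≤ θ := by positivity
  rcases le_or_gt Ψ M with hΨM | hΨM
  · rw [Finset.filter_eq_empty_iff.mpr, Finset.card_empty, Nat.cast_zero]
    · positivity
    · intro σ _
      rw [not_not, CompensatesShift]
      have h1 := nsq_nonneg (B *ᵥ signVec σ)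
      have h2 := hB.qf_nonneg (signVec σ)
      have h3 : 0 ≤ nsq (B *ᵥ signVec σ) / qf B (signVec σ) := by positivity
      have h4 : δ / (1 - δ * L) * Ψ ≤ θ := by
        rw [hθ, div_mul_eq_mul_div]; gcongr
      linarith
  have hΨ0 : 0 < Ψ := hM.trans hΨM
  have hev := eigenvalues_le_of_qf_le hB.1 hBL
  have hev0 := hB.eigenvalues_nonneg
  have hΨLS : δ * Ψ ≤ L := by
    have h1 : Ψ ≤ L * B.trace.re := by
      rw [hΨ, trace_sq_eq_sum_eigenvalues hB.1, trace_eq_sum_eigenvalues hB.1, Finset.mul_sum]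
      refine Finset.sum_le_sum fun i _ => ?_
      nlinarith [hev i, hev0 i]
    have h2 : Ψ ≤ L * S := h1.trans (by gcongr)
    have h3 : δ * Ψ ≤ δ * (L * S) := by gcongr
    nlinarith [mul_nonneg hδ hL.le]
  set f : ℝ → ℝ := fun x => (1 - δ * L) * x ^ 2 + (-(δ * Ψ)) * x with hf
  set C := specFun hB.1 f with hC
  have hCeq : C = ((1 - δ * L : ℝ) : ℂ) • (B * B) + ((-(δ * Ψ) : ℝ) : ℂ) • B := by
    rw [hC, hf, ← specFun_add, ← specFun_smul, ← specFun_smul, specFun_sq, specFun_id]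
  have hCtr : ε * Ψ ≤ C.trace.re := by
    have h1 : C.trace.re = (1 - δ * L) * Ψ - δ * Ψ * B.trace.re := by
      rw [hCeq, Matrix.trace_add, Matrix.trace_smul, Matrix.trace_smul, smul_eq_mul, smul_eq_mul,
        Complex.add_re, Complex.re_ofReal_mul, Complex.re_ofReal_mul]
      ring
    have h2 : δ * Ψ * B.trace.re ≤ δ * Ψ * S := by gcongr
    rw [h1]
    nlinarith
  have hCsq : (C * C).trace.re ≤ L ^ 2 * Ψ := by
    rw [hC, specFun_mul, trace_specFun, Complex.ofReal_re, hΨ, trace_sq_eq_sum_eigenvalues hB.1,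
      Finset.mul_sum]
    refine Finset.sum_le_sum fun i _ => ?_
    set x := hB.1.eigenvalues i
    have hx0 : 0 ≤ x := hev0 i
    have hxL : x ≤ L := hev i
    have h1 : (1 - δ * L) * x ^ 2 ≤ L * x := by
      have : (1 - δ * L) * x ^ 2 ≤ 1 * (L * x) := by
        gcongr
        · nlinarith [mul_nonneg hδ hL.le]
        · nlinarith
      linarith
    have h2 : 0 ≤ (1 - δ * L) * x ^ 2 := by positivity
    have h3 : δ * Ψ * x ≤ L * x := by gcongr
    have h4 : 0 ≤ δ * Ψ * x := by positivity
    rw [← pow_two, ← mul_pow]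
    refine sq_le_sq' ?_ ?_ <;> simp only [hf] <;> linarith
  have hcheb := card_qf_signVec_nonpos_le (isHermitian_specFun hB.1 f) (by positivity) hCtr
  have hsub : (Finset.univ.filter fun σ : ι → ℤˣ => ¬ CompensatesShift B L δ θ (signVec σ)).card ≤
      (Finset.univ.filter fun σ : ι → ℤˣ => qf C (signVec σ) ≤ 0).card := by
    refine Finset.card_le_card fun σ hσ => ?_
    rw [Finset.mem_filter] at hσ ⊢
    refine ⟨Finset.mem_univ _, ?_⟩
    have h1 := hσ.2
    rw [CompensatesShift, not_le, ← hΨ] at h1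
    set w := signVec σ
    rw [hCeq, qf_add, qf_ofReal_smul, qf_ofReal_smul, qf_mul_self hB.1]
    have h2 : nsq (B *ᵥ w) / qf B w ≤ δ / (1 - δ * L) * Ψ := by linarith
    rcases (hB.qf_nonneg w).eq_or_lt with h0 | h0
    · rw [hB.mulVec_eq_zero_of_qf h0.symm, ← h0]
      simp [nsq]
    · rw [div_le_iff₀ h0, div_mul_eq_mul_div, div_mul_eq_mul_div, le_div_iff₀ h1L] at h2
      linarith
  set k : ℝ := ((Finset.univ.filter fun σ : ι → ℤˣ =>
    ¬ CompensatesShift B L δ θ (signVec σ)).card : ℝ) with hk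
  set K : ℝ := (Fintype.card (ι → ℤˣ) : ℝ) with hK
  have hK0 : 0 ≤ K := Nat.cast_nonneg _
  have h1 : k * (ε * Ψ) ^ 2 ≤ 2 * K * (L ^ 2 * Ψ) := by
    calc k * (ε * Ψ) ^ 2 ≤ _ := mul_le_mul_of_nonneg_right (Nat.cast_le.mpr hsub) (sq_nonneg _)
      _ ≤ _ := hcheb
      _ ≤ _ := by gcongr
  have h2 : 2 * K * (L ^ 2 * Ψ) ≤ K * (ε ^ 2 * Ψ * p) * Ψ := by
    have : 2 * L ^ 2 ≤ ε ^ 2 * Ψ * p := hMp.trans (by gcongr)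
    calc 2 * K * (L ^ 2 * Ψ) = K * (2 * L ^ 2) * Ψ := by ring
      _ ≤ _ := by gcongr
  have h3 : k * (ε * Ψ) ^ 2 ≤ p * K * (ε * Ψ) ^ 2 := by
    calc _ ≤ _ := h1.trans h2
      _ = _ := by ring
  have h4 : 0 < (ε * Ψ) ^ 2 := by positivity
  exact le_of_mul_le_mul_right h3 h4

/-- After exposing `m` independent sign vectors, all but `bad w` of the steps shift the form by
`δ` on the orthogonal complement, up to an error matrix of small trace. -/
theorem exists_barrier {L δ S M ε p : ℝ} (hL : 0 < L) (hδ : 0 ≤ δ) (hδL : δ * L < 1)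
    (hε : 0 < ε) (hM : 0 < M) (hp : 0 ≤ p) (hS : δ * (S + L) ≤ 1 - ε)
    (hMp : 2 * L ^ 2 ≤ ε ^ 2 * M * p) (m : ℕ) :
    ∀ {B : Matrix ι ι ℂ}, B.PosSemidef → (∀ v, qf B v ≤ L * nsq v) →
      B.trace.re + m * (δ * M / (1 - δ * L)) ≤ S →
      ∃ (bad : (Fin m → ι → ℤˣ) → ℕ) (T : (Fin m → ι → ℤˣ) → Matrix ι ι ℂ),
        (∀ w, (T w).PosSemidef) ∧
        (∀ w, L ^ 2 * (T w).trace.re ≤ B.trace.re + m * (δ * M / (1 - δ * L))) ∧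
        ∑ w, Real.exp (bad w) ≤ ((1 + 2 * p) * Fintype.card (ι → ℤˣ)) ^ m ∧
        ∀ w (Q : Matrix ι ι ℂ) (v : ι → ℂ), B *ᵥ (Q *ᵥ v) = v →
          (∀ i, star (signVec (w i)) ⬝ᵥ v = 0) →
          ((m : ℝ) - bad w) * δ * nsq v ≤ qf (Q + T w) v := by
  classical
  set θ := δ * M / (1 - δ * L) with hθ
  have h1L : 0 < 1 - δ * L := by linarith
  have hθ0 : 0 ≤ θ := by positivity
  induction m with
  | zero =>
    intro B hB hBL hBS
    refine ⟨fun _ => 0, fun _ => 0, fun _ => PosSemidef.zero, fun _ => ?_, ?_, ?_⟩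
    · simpa using trace_re_nonneg hB
    · simp
    · intro w Q v hQ _
      have h1 := hB.qf_nonneg (Q *ᵥ v)
      have h2 : qf B (Q *ᵥ v) = qf Q v := by
        rw [qf, qf, hQ, Matrix.star_dotProduct, Complex.star_def, Complex.conj_re]
      simpa [← h2] using h1
  | succ m ih =>
    intro B hB hBL hBS
    have hmθ : 0 ≤ (m : ℝ) * θ := by positivity
    push_cast at hBS
    set bit : (ι → ℤˣ) → ℕ := fun σ => if CompensatesShift B L δ θ (signVec σ) then 0 else 1
      with hbit
    have hstep : ∀ σ : ι → ℤˣ, ∃ B' T : Matrix ι ι ℂ, B'.PosSemidef ∧ T.PosSemidef ∧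
        (∀ v, qf B' v ≤ L * nsq v) ∧ B'.trace.re + L ^ 2 * T.trace.re ≤ B.trace.re + θ ∧
        ∀ (Q : Matrix ι ι ℂ) (v : ι → ℂ), B *ᵥ (Q *ᵥ v) = v → star (signVec σ) ⬝ᵥ v = 0 →
          B' *ᵥ ((Q - (((1 - bit σ) * δ : ℝ) : ℂ) • 1 + T) *ᵥ v) = v := by
      intro σ
      by_cases h : CompensatesShift B L δ θ (signVec σ)
      · simpa [hbit, h] using exists_compress_shift hB hL hδ hδL hBL h
      · simpa [hbit, h] using exists_compress hB hθ0 hBL (signVec σ)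
    choose B' T₀ hB' hT₀ hBL' htr hker using hstep
    have htr' : ∀ σ, (B' σ).trace.re + m * θ ≤ S := fun σ => by
      have h1 := trace_re_nonneg (hT₀ σ)
      have h2 := htr σ
      have h3 : 0 ≤ L ^ 2 * (T₀ σ).trace.re := by positivity
      linarith
    choose bad T hT hTtr hexp hpos using fun σ => ih (hB' σ) (hBL' σ) (htr' σ)
    refine ⟨fun w => bit (w 0) + bad (w 0) (Fin.tail w), fun w => T₀ (w 0) + T (w 0) (Fin.tail w),
      fun w => (hT₀ _).add (hT _ _), fun w => ?_, ?_, ?_⟩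
    · have h1 := htr (w 0)
      have h2 := hTtr (w 0) (Fin.tail w)
      rw [Matrix.trace_add, Complex.add_re]
      push_cast
      linarith
    · have hsum : ∑ w : Fin (m + 1) → ι → ℤˣ,
          Real.exp ((bit (w 0) + bad (w 0) (Fin.tail w) : ℕ) : ℝ) =
          ∑ σ, ∑ w, Real.exp (bit σ) * Real.exp (bad σ w) := by
        rw [← (Fin.consEquiv fun _ : Fin (m + 1) => ι → ℤˣ).sum_comp, Fintype.sum_prod_type]
        refine Finset.sum_congr rfl fun σ _ => Finset.sum_congr rfl fun w _ => ?_
        rw [← Real.exp_add]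
        simp [Fin.consEquiv]
      set K : ℝ := (Fintype.card (ι → ℤˣ) : ℝ) with hK
      have hbits : ∑ σ, Real.exp (bit σ) ≤ (1 + 2 * p) * K := by
        have hcard := card_not_compensatesShift_le hB hL hδ hδL hε hM hp hS hMp hBL
          (by linarith : B.trace.re ≤ S)
        rw [← hθ] at hcard
        have h1 : ∀ σ, Real.exp (bit σ) ≤
            1 + 2 * (if ¬ CompensatesShift B L δ θ (signVec σ) then 1 else 0) := by
          intro σ
          by_cases h : CompensatesShift B L δ θ (signVec σ)
          · simp [hbit, h]
          · simp only [hbit, h, if_false, not_false_eq_true, if_true]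
            have := Real.exp_one_lt_d9
            norm_num at this ⊢
            linarith
        calc _ ≤ ∑ σ, (1 + 2 * (if ¬ CompensatesShift B L δ θ (signVec σ) then (1 : ℝ) else 0)) :=
              Finset.sum_le_sum fun σ _ => h1 σ
          _ = K + 2 * ((Finset.univ.filter fun σ : ι → ℤˣ =>
                ¬ CompensatesShift B L δ θ (signVec σ)).card : ℝ) := by
              rw [Finset.sum_add_distrib, ← Finset.mul_sum, Finset.sum_boole]
              simp [hK]
          _ ≤ _ := by linarith
      rw [hsum]
      calc _ = ∑ σ, Real.exp (bit σ) * ∑ w, Real.exp (bad σ w) := by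
            simp only [Finset.mul_sum]
        _ ≤ ∑ σ, Real.exp (bit σ) * ((1 + 2 * p) * K) ^ m := by
            refine Finset.sum_le_sum fun σ _ => ?_
            have := hexp σ
            gcongr
        _ = (∑ σ, Real.exp (bit σ)) * ((1 + 2 * p) * K) ^ m := by rw [Finset.sum_mul]
        _ ≤ ((1 + 2 * p) * K) * ((1 + 2 * p) * K) ^ m := by gcongr
        _ = _ := by ring
    · intro w Q v hQ hv
      have h1 := hker (w 0) Q v hQ (hv 0)
      have h2 := hpos (w 0) (Fin.tail w) _ v h1 fun i => hv i.succ
      rw [qf_add, qf_add, qf_sub, qf_smul_one] at h2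
      rw [qf_add, qf_add]
      push_cast
      linarith

end Recursion

section RandomRotation

variable {ι κ : Type*} [Fintype ι] [DecidableEq ι] [Fintype κ] [DecidableEq κ]

/-- The quadratic form of `X` on the range of `J` is at most `K`, up to an error of trace `R`. -/
def NearlyBounded (J : Matrix ι κ ℂ) (K R : ℝ) : Set (Matrix ι ι ℂ) :=
  {X | ∃ T : Matrix κ κ ℂ, T.PosSemidef ∧ T.trace.re ≤ R ∧
    ∀ y, qf X (J *ᵥ y) ≤ K * nsq y + qf T y}

lemma exists_unitary_submatrix_eq {ι κ : Type*} [Fintype ι] [DecidableEq ι] [DecidableEq κ]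
    (φ : κ ↪ ι) {A : Matrix ι κ ℂ} (hA : Aᴴ * A = 1) :
    ∃ U ∈ unitary (Matrix ι ι ℂ), U.submatrix id φ = A := by
  set v : ι → EuclideanSpace ℂ ι :=
    Function.extend φ (fun y => WithLp.toLp 2 (fun p => A p y)) 0 with hv
  have hvφ : ∀ y, v (φ y) = WithLp.toLp 2 (fun p => A p y) :=
    fun y => φ.injective.extend_apply _ _ y
  have horth : Orthonormal ℂ ((Set.range φ).domRestrict v) := by
    rw [orthonormal_iff_ite]
    intro p q
    obtain ⟨y, hy⟩ : ∃ y, φ y = p.1 := p.2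
    obtain ⟨y', hy'⟩ : ∃ y, φ y = q.1 := q.2
    have h := congrFun (congrFun hA y) y'
    have hi : inner ℂ (v p.1) (v q.1) = (1 : Matrix κ κ ℂ) y y' := by
      rw [← hy, ← hy', hvφ, hvφ, EuclideanSpace.inner_toLp_toLp, ← h]
      simp [Matrix.mul_apply, dotProduct, mul_comm]
    refine hi.trans ?_
    rw [Matrix.one_apply]
    refine if_congr ?_ rfl rfl
    rw [Subtype.ext_iff, ← hy, ← hy', φ.injective.eq_iff]
  obtain ⟨b, hb⟩ := horth.exists_orthonormalBasis_extension_of_card_eq (by simp)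
  refine ⟨Matrix.of fun p q => b q p, ?_, ?_⟩
  · rw [← Matrix.unitaryGroup, Matrix.mem_unitaryGroup_iff']
    ext p q
    have h := orthonormal_iff_ite.mp b.orthonormal p q
    rw [Matrix.one_apply, ← h]
    simp [Matrix.mul_apply, EuclideanSpace.inner_eq_star_dotProduct, dotProduct,
      Matrix.star_apply, mul_comm]
  · ext p y
    simp [hb (φ y) ⟨y, rfl⟩, hvφ]

lemma exists_unitary_mul_eq {ι κ : Type*} [Fintype ι] [DecidableEq ι] [DecidableEq κ]
    (φ : κ ↪ ι) {A J : Matrix ι κ ℂ} (hA : Aᴴ * A = 1)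
    (hJ : Jᴴ * J = 1) : ∃ V ∈ unitary (Matrix ι ι ℂ), V * A = J := by
  obtain ⟨U, hU, hUA⟩ := exists_unitary_submatrix_eq φ hA
  obtain ⟨U', hU', hUJ⟩ := exists_unitary_submatrix_eq φ hJ
  have h : ∀ U : Matrix ι ι ℂ, U.submatrix id φ = U * (1 : Matrix ι ι ℂ).submatrix id φ := by
    intro U
    ext p y
    simp [Matrix.mul_apply, Matrix.one_apply]
  refine ⟨U' * star U, mul_mem hU' (Unitary.star_mem hU), ?_⟩
  rw [← hUA, h U, Matrix.mul_assoc, ← Matrix.mul_assoc (star U), Unitary.star_mul_self_of_mem hU,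
    Matrix.one_mul, ← h, hUJ]

lemma exists_isometry_orthogonal {ι κ : Type*} [Fintype ι] [Fintype κ] [DecidableEq κ]
    {m : ℕ} (hm : m + Fintype.card κ ≤ Fintype.card ι) (w : Fin m → ι → ℂ) :
    ∃ A : Matrix ι κ ℂ, Aᴴ * A = 1 ∧ ∀ i y, star (w i) ⬝ᵥ A *ᵥ y = 0 := by
  set M : Matrix (Fin m) ι ℂ := Matrix.of fun i => star (w i) with hM
  set f : EuclideanSpace ℂ ι →ₗ[ℂ] (Fin m → ℂ) :=
    M.mulVecLin ∘ₗ (WithLp.linearEquiv 2 ℂ (ι → ℂ)).toLinearMap with hf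
  set E := LinearMap.ker f
  have hdim : Fintype.card κ ≤ Module.finrank ℂ E := by
    have h1 := LinearMap.finrank_range_add_finrank_ker f
    have h2 : Module.finrank ℂ (LinearMap.range f) ≤ m := by
      simpa using Submodule.finrank_le (LinearMap.range f)
    rw [finrank_euclideanSpace] at h1
    change _ ≤ Module.finrank ℂ (LinearMap.ker f)
    omega
  set b := stdOrthonormalBasis ℂ E
  set g : κ → Fin (Module.finrank ℂ E) := fun y => Fin.castLE hdim (Fintype.equivFin κ y)
  have hg : Function.Injective g := (Fin.castLE_injective hdim).comp (Fintype.equivFin κ).injective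
  refine ⟨Matrix.of fun p y => (b (g y) : EuclideanSpace ℂ ι) p, ?_, fun i y => ?_⟩
  · ext y y'
    have h := orthonormal_iff_ite.mp b.orthonormal (g y) (g y')
    rw [Matrix.one_apply, ← if_congr hg.eq_iff rfl rfl, ← h]
    simp [Matrix.mul_apply, EuclideanSpace.inner_eq_star_dotProduct, dotProduct, mul_comm]
  · rw [Matrix.dotProduct_mulVec]
    convert zero_dotProduct y
    ext j
    have h : M *ᵥ (b (g j) : EuclideanSpace ℂ ι).ofLp = 0 := LinearMap.mem_ker.mp (b (g j)).2
    simpa [hM, Matrix.mulVec, Matrix.vecMul, dotProduct] using congrFun h i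

lemma exists_unitary_orthogonal (φ : κ ↪ ι) {m : ℕ}
    (hm : m + Fintype.card κ ≤ Fintype.card ι) {J : Matrix ι κ ℂ} (hJ : Jᴴ * J = 1)
    (w : Fin m → ι → ℂ) :
    ∃ V ∈ unitary (Matrix ι ι ℂ), ∀ i y, star (w i) ⬝ᵥ (star V * J) *ᵥ y = 0 := by
  obtain ⟨A, hA, hAw⟩ := exists_isometry_orthogonal (κ := κ) hm w
  obtain ⟨V, hV, rfl⟩ := exists_unitary_mul_eq φ hA hJ
  refine ⟨V, hV, fun i y => ?_⟩
  rw [← Matrix.mul_assoc, Unitary.star_mul_self_of_mem hV, Matrix.one_mul]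
  exact hAw i y

lemma qf_conjTranspose_mul_mul {ι κ : Type*} [Fintype ι] [Fintype κ] (A : Matrix ι κ ℂ)
    (T : Matrix ι ι ℂ) (y : κ → ℂ) :
    qf (Aᴴ * T * A) y = qf T (A *ᵥ y) := by
  rw [qf, qf, Matrix.star_mulVec, ← Matrix.dotProduct_mulVec, Matrix.mulVec_mulVec,
    Matrix.mulVec_mulVec, Matrix.mul_assoc]

lemma nsq_mulVec_of_isometry {ι κ : Type*} [Fintype ι] [Fintype κ] [DecidableEq κ]
    {A : Matrix ι κ ℂ} (hA : Aᴴ * A = 1) (y : κ → ℂ) :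
    nsq (A *ᵥ y) = nsq y := by
  rw [nsq, nsq, Matrix.star_mulVec, ← Matrix.dotProduct_mulVec, Matrix.mulVec_mulVec, hA,
    Matrix.one_mulVec]

lemma trace_conjTranspose_mul_mul_le {A : Matrix ι κ ℂ} (hA : Aᴴ * A = 1) {T : Matrix ι ι ℂ}
    (hT : T.PosSemidef) : (Aᴴ * T * A).trace.re ≤ T.trace.re := by
  set P : Matrix ι ι ℂ := 1 - A * Aᴴ with hP
  have hPh : Pᴴ = P := by simp [hP]
  have hPP : P * P = P := by
    have : A * Aᴴ * (A * Aᴴ) = A * Aᴴ := by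
      rw [Matrix.mul_assoc, ← Matrix.mul_assoc Aᴴ, hA, Matrix.one_mul]
    rw [hP, Matrix.sub_mul, Matrix.mul_sub, Matrix.mul_sub, this]
    simp
  have h1 := trace_re_nonneg (hT.conjTranspose_mul_mul_same P)
  rw [hPh, Matrix.trace_mul_comm, ← Matrix.mul_assoc, hPP, hP, Matrix.sub_mul, Matrix.one_mul,
    Matrix.trace_sub, Matrix.mul_assoc, Matrix.trace_mul_comm, Complex.sub_re] at h1
  linarith

/-- If `z - X` is positive with controlled inverse `B`, then most rotations of `X` determined by
`m` sign vectors are nearly bounded on the range of `J`. -/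
lemma card_not_nearlyBounded_le {L δ S M ε p η z : ℝ} (hL : 0 < L) (hδ : 0 ≤ δ)
    (hδL : δ * L < 1) (hε : 0 < ε) (hM : 0 < M) (hp : 0 ≤ p) (hS : δ * (S + L) ≤ 1 - ε)
    (hMp : 2 * L ^ 2 ≤ ε ^ 2 * M * p) {m : ℕ} {J : Matrix ι κ ℂ} (hJ : Jᴴ * J = 1)
    {V : (Fin m → ι → ℤˣ) → Matrix ι ι ℂ} (hV : ∀ w, V w ∈ unitary (Matrix ι ι ℂ))
    (hVw : ∀ w i y, star (signVec (w i)) ⬝ᵥ (star (V w) * J) *ᵥ y = 0)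
    {B X : Matrix ι ι ℂ} (hB : B.PosSemidef) (hBL : ∀ v, qf B v ≤ L * nsq v)
    (hBS : B.trace.re + m * (δ * M / (1 - δ * L)) ≤ S) (hBX : B * ((z : ℂ) • 1 - X) = 1)
    [DecidablePred fun w => V w * X * star (V w) ∉
      NearlyBounded J (z - (1 - η) * m * δ) (S / L ^ 2)] :
    ((Finset.univ.filter fun w => V w * X * star (V w) ∉
      NearlyBounded J (z - (1 - η) * m * δ) (S / L ^ 2)).card : ℝ) ≤
      Real.exp ((2 * p - η) * m) * Fintype.card (Fin m → ι → ℤˣ) := by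
  classical
  obtain ⟨bad, T, hT, hTtr, hexp, hpos⟩ :=
    exists_barrier hL hδ hδL hε hM hp hS hMp m hB hBL hBS
  have hgood : ∀ w, (bad w : ℝ) ≤ η * m → V w * X * star (V w) ∈
      NearlyBounded J (z - (1 - η) * m * δ) (S / L ^ 2) := by
    intro w hw
    have hVV : star (star (V w)) * star (V w) = 1 := by
      rw [star_star]; exact Unitary.mul_star_self_of_mem (hV w)
    have hA : (star (V w) * J)ᴴ * (star (V w) * J) = 1 := by
      rw [Matrix.conjTranspose_mul, Matrix.mul_assoc, ← Matrix.mul_assoc _ _ J,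
        ← star_eq_conjTranspose, hVV, Matrix.one_mul, hJ]
    refine ⟨(star (V w) * J)ᴴ * T w * (star (V w) * J),
      (hT w).conjTranspose_mul_mul_same _, ?_, fun y => ?_⟩
    · refine (trace_conjTranspose_mul_mul_le hA (hT w)).trans ?_
      rw [le_div_iff₀ (by positivity), mul_comm]
      exact (hTtr w).trans hBS
    · set v := (star (V w) * J) *ᵥ y with hv
      have h1 := hpos w ((z : ℂ) • 1 - X) v
        (by rw [Matrix.mulVec_mulVec, hBX, Matrix.one_mulVec]) fun i => hVw w i y
      have h2 : qf (V w * X * star (V w)) (J *ᵥ y) = qf X v := by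
        have := qf_conjTranspose_mul_mul (star (V w)) X (J *ᵥ y)
        rw [← star_eq_conjTranspose, star_star] at this
        rw [this, hv, Matrix.mulVec_mulVec]
      have h3 : nsq v = nsq y := nsq_mulVec_of_isometry hA y
      rw [qf_add, qf_sub, qf_smul_one, h3] at h1
      rw [h2, qf_conjTranspose_mul_mul, ← hv]
      have h4 : (1 - η) * m * δ * nsq y ≤ (m - bad w) * δ * nsq y := by
        have := nsq_nonneg y
        gcongr
        linarith
      linarith
  set K : ℝ := (Fintype.card (ι → ℤˣ) : ℝ) with hK
  have hbound : ((Finset.univ.filter fun w => V w * X * star (V w) ∉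
      NearlyBounded J (z - (1 - η) * m * δ) (S / L ^ 2)).card : ℝ) * Real.exp (η * m) ≤
      ((1 + 2 * p) * K) ^ m := by
    refine le_trans ?_ hexp
    rw [← nsmul_eq_mul, ← Finset.sum_const]
    refine le_trans (Finset.sum_le_sum fun w hw => ?_)
      (Finset.sum_le_sum_of_subset_of_nonneg (Finset.filter_subset _ _)
        fun _ _ _ => (Real.exp_pos _).le)
    have h1 := (Finset.mem_filter.mp hw).2
    rw [Real.exp_le_exp]
    by_contra h2
    exact h1 (hgood w (not_le.mp h2).le)
  have hpow : ((1 + 2 * p) * K) ^ m ≤ Real.exp (2 * p * m) * K ^ m := by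
    rw [mul_pow, mul_comm (2 * p), Real.exp_nat_mul]
    have := Real.add_one_le_exp (2 * p)
    gcongr
    linarith
  have hcard : (Fintype.card (Fin m → ι → ℤˣ) : ℝ) = K ^ m := by
    simp [hK]
  rw [hcard, sub_mul (2 * p), Real.exp_sub, div_mul_eq_mul_div, le_div_iff₀ (Real.exp_pos _)]
  exact hbound.trans hpow

end RandomRotation

section Measurability

variable {ι κ : Type*} [Fintype ι] [Fintype κ]

instance borelSpaceMatrix : BorelSpace (Matrix ι κ ℂ) :=
  inferInstanceAs (BorelSpace (ι → κ → ℂ))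

lemma continuous_qf (v : ι → ℂ) : Continuous fun A : Matrix ι ι ℂ => qf A v := by
  unfold qf
  fun_prop

lemma isClosed_posSemidef : IsClosed {T : Matrix ι ι ℂ | T.PosSemidef} := by
  have h : {T : Matrix ι ι ℂ | T.PosSemidef} =
      {T | T.IsHermitian} ∩ ⋂ v, {T | 0 ≤ qf T v} := by
    ext T
    simp only [Set.mem_ofPred_eq, Set.mem_inter_iff, Set.mem_iInter]
    exact ⟨fun hT => ⟨hT.1, hT.qf_nonneg⟩, fun hT => posSemidef_of_qf_nonneg hT.1 hT.2⟩
  rw [h]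
  refine IsClosed.inter ?_ (isClosed_iInter fun v => isClosed_le continuous_const (continuous_qf v))
  exact isClosed_eq continuous_id.matrix_conjTranspose continuous_id

lemma continuous_trace_re : Continuous fun A : Matrix ι ι ℂ => A.trace.re :=
  Complex.continuous_re.comp continuous_id.matrix_trace

lemma isCompact_posSemidef_trace_le (R : ℝ) :
    IsCompact {T : Matrix ι ι ℂ | T.PosSemidef ∧ T.trace.re ≤ R} := by
  classical
  have hK : IsCompact (Set.univ.pi fun _ : ι => Set.univ.pi fun _ : ι =>
      Metric.closedBall (0 : ℂ) R) :=
    isCompact_univ_pi fun _ => isCompact_univ_pi fun _ => isCompact_closedBall _ _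
  refine IsCompact.of_isClosed_subset (X := Matrix ι ι ℂ) hK
    (isClosed_posSemidef.inter (isClosed_le continuous_trace_re continuous_const)) ?_
  rintro T ⟨hT, hR⟩ i - j -
  rw [mem_closedBall_zero_iff]
  have h0 := trace_re_nonneg hT
  have h1 : ‖T i j‖ ^ 2 ≤ (T * T).trace.re := by
    rw [trace_mul_self_re hT.1]
    calc ‖T i j‖ ^ 2 ≤ ∑ j, ‖T i j‖ ^ 2 :=
          Finset.single_le_sum (f := fun j => ‖T i j‖ ^ 2) (fun _ _ => by positivity)
            (Finset.mem_univ j)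
      _ ≤ _ := Finset.single_le_sum (f := fun i => ∑ j, ‖T i j‖ ^ 2)
            (fun _ _ => by positivity) (Finset.mem_univ i)
  have h2 : (T * T).trace.re ≤ T.trace.re ^ 2 := by
    rw [trace_sq_eq_sum_eigenvalues hT.1, trace_eq_sum_eigenvalues hT.1]
    rw [pow_two, Finset.sum_mul]
    refine Finset.sum_le_sum fun i _ => ?_
    rw [pow_two]
    exact mul_le_mul_of_nonneg_left
      (Finset.single_le_sum (fun j _ => hT.eigenvalues_nonneg j) (Finset.mem_univ i))
      (hT.eigenvalues_nonneg i)
  exact (abs_le_of_sq_le_sq' (h1.trans h2) h0).2.trans hR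

lemma IsCompact.isClosed_exists {α β : Type*} [TopologicalSpace α] [TopologicalSpace β]
    {K : Set α} (hK : IsCompact K) {C : Set (α × β)} (hC : IsClosed C) :
    IsClosed {x | ∃ t ∈ K, (t, x) ∈ C} := by
  have := isCompact_iff_compactSpace.mp hK
  have h1 : IsClosed {q : K × β | (q.1.1, q.2) ∈ C} := hC.preimage (by fun_prop)
  convert isClosedMap_snd_of_compactSpace _ h1
  ext x
  simp

lemma measurableSet_nearlyBounded (J : Matrix ι κ ℂ) (K R : ℝ) :
    MeasurableSet (NearlyBounded J K R) := by
  apply IsClosed.measurableSet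
  have hC : IsClosed {q : Matrix κ κ ℂ × Matrix ι ι ℂ |
      ∀ y, qf q.2 (J *ᵥ y) ≤ K * nsq y + qf q.1 y} := by
    simp only [Set.ofPred_forall]
    exact isClosed_iInter fun y => isClosed_le ((continuous_qf _).comp continuous_snd)
      (continuous_const.add ((continuous_qf _).comp continuous_fst))
  convert (isCompact_posSemidef_trace_le (ι := κ) R).isClosed_exists hC using 1
  ext X
  simp [NearlyBounded, and_assoc]

variable [DecidableEq ι]

/-- The matrices `X` such that `z - X` has a positive semidefinite inverse of norm at most `L` and
trace at most `G`. -/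
def ResolventBounded (ι : Type*) [Fintype ι] [DecidableEq ι] (z L G : ℝ) : Set (Matrix ι ι ℂ) :=
  {X | ∃ B : Matrix ι ι ℂ, B.PosSemidef ∧ B.trace.re ≤ G ∧ (∀ v, qf B v ≤ L * nsq v) ∧
    B * ((z : ℂ) • 1 - X) = 1}

lemma measurableSet_resolventBounded (z L G : ℝ) :
    MeasurableSet (ResolventBounded ι z L G) := by
  apply IsClosed.measurableSet
  have hC : IsClosed {q : Matrix ι ι ℂ × Matrix ι ι ℂ |
      (∀ v, qf q.1 v ≤ L * nsq v) ∧ q.1 * ((z : ℂ) • 1 - q.2) = 1} := by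
    rw [Set.ofPred_and, Set.ofPred_forall]
    exact (isClosed_iInter fun y => isClosed_le ((continuous_qf _).comp continuous_fst)
      continuous_const).inter (isClosed_eq (by fun_prop) continuous_const)
  convert (isCompact_posSemidef_trace_le (ι := ι) G).isClosed_exists hC using 1
  ext X
  simp [ResolventBounded, and_assoc]

lemma ResolventBounded.conj_unitary {z L G : ℝ} {X V : Matrix ι ι ℂ}
    (hV : V ∈ unitary (Matrix ι ι ℂ)) (hX : X ∈ ResolventBounded ι z L G) :
    V * X * star V ∈ ResolventBounded ι z L G := by
  obtain ⟨B, hB, hG, hL, hBX⟩ := hX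
  have h1 := Unitary.star_mul_self_of_mem hV
  have h2 := Unitary.mul_star_self_of_mem hV
  refine ⟨V * B * star V, hB.mul_mul_conjTranspose_same V, ?_, fun v => ?_, ?_⟩
  · rwa [Matrix.trace_mul_comm, ← Matrix.mul_assoc, h1, Matrix.one_mul]
  · have h3 := qf_conjTranspose_mul_mul (star V) B v
    rw [← star_eq_conjTranspose, star_star] at h3
    rw [h3, ← nsq_mulVec_of_isometry (A := star V)
      (by rw [← star_eq_conjTranspose, star_star, h2])]
    exact hL _
  · have h3 : (z : ℂ) • (1 : Matrix ι ι ℂ) - V * X * star V =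
        V * ((z : ℂ) • 1 - X) * star V := by
      rw [Matrix.mul_sub, Matrix.sub_mul, Matrix.mul_smul, Matrix.mul_one, Matrix.smul_mul, h2]
    rw [h3, show V * B * star V * (V * ((z : ℂ) • 1 - X) * star V) =
      V * (B * ((star V * V) * ((z : ℂ) • 1 - X))) * star V by simp only [Matrix.mul_assoc],
      h1, Matrix.one_mul, hBX, Matrix.mul_one, h2]

/-- If every outcome lies in at most a fraction `c` of the events `A w`, then some of these events
has probability at most `c`. -/
lemma measure_le_of_card_le {Ω W : Type*} [MeasurableSpace Ω] (ℙ : Measure Ω)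
    [IsProbabilityMeasure ℙ] [Fintype W] [Nonempty W] {A : W → Set Ω}
    (hA : ∀ w, MeasurableSet (A w)) {c : ℝ} {q : ENNReal} (hq : ∀ w, q ≤ ℙ (A w))
    (hcard : ∀ ω, ∀ s : Finset W, (∀ w ∈ s, ω ∈ A w) → (s.card : ℝ) ≤ c * Fintype.card W) :
    q ≤ ENNReal.ofReal c := by
  classical
  have hW : (0 : ℝ) < Fintype.card W := by exact_mod_cast Fintype.card_pos
  have h1 : (Fintype.card W : ENNReal) * q ≤ ∑ w, ℙ (A w) := by
    rw [← nsmul_eq_mul]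
    simpa using Finset.sum_le_sum fun w (_ : w ∈ Finset.univ) => hq w
  have h2 : ∑ w, ℙ (A w) ≤ ENNReal.ofReal (c * Fintype.card W) := by
    calc ∑ w, ℙ (A w) = ∑ w, ∫⁻ ω, (A w).indicator 1 ω ∂ℙ := by
          simp only [lintegral_indicator_one (hA _)]
      _ = ∫⁻ ω, ∑ w, (A w).indicator 1 ω ∂ℙ :=
          (lintegral_finsetSum _ fun w _ => measurable_one.indicator (hA w)).symm
      _ ≤ ∫⁻ _, ENNReal.ofReal (c * Fintype.card W) ∂ℙ := by
          refine lintegral_mono fun ω => ?_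
          have h := hcard ω (Finset.univ.filter fun w => ω ∈ A w) (by simp)
          calc ∑ w, (A w).indicator (1 : Ω → ENNReal) ω
              = ((Finset.univ.filter fun w => ω ∈ A w).card : ENNReal) := by
                simp [Set.indicator_apply]
            _ = ENNReal.ofReal ((Finset.univ.filter fun w => ω ∈ A w).card : ℝ) := by simp
            _ ≤ _ := ENNReal.ofReal_le_ofReal h
      _ = _ := by simp
  have h3 := h1.trans h2
  rw [mul_comm c, ENNReal.ofReal_mul hW.le, ENNReal.ofReal_natCast] at h3
  exact (ENNReal.mul_le_mul_iff_right (by exact_mod_cast Fintype.card_ne_zero)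
    (ENNReal.natCast_ne_top _)).mp h3

theorem measure_resolventBounded_diff_nearlyBounded_le [DecidableEq κ] {Ω : Type*}
    [MeasurableSpace Ω] (ℙ : Measure Ω)
    [IsProbabilityMeasure ℙ] {X : Ω → Matrix ι ι ℂ} (hX : Measurable X)
    (hinv : ∀ U ∈ unitary (Matrix ι ι ℂ),
      Measure.map (fun ω => U * X ω * star U) ℙ = Measure.map X ℙ)
    {L δ S M ε p η z G : ℝ} (hL : 0 < L) (hδ : 0 ≤ δ)
    (hδL : δ * L < 1) (hε : 0 < ε) (hM : 0 < M) (hp : 0 ≤ p) (hS : δ * (S + L) ≤ 1 - ε)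
    (hMp : 2 * L ^ 2 ≤ ε ^ 2 * M * p) (φ : κ ↪ ι) {m : ℕ}
    (hm : m + Fintype.card κ ≤ Fintype.card ι) {J : Matrix ι κ ℂ} (hJ : Jᴴ * J = 1)
    (hG : G + m * (δ * M / (1 - δ * L)) ≤ S) :
    ℙ {ω | X ω ∈ ResolventBounded ι z L G ∧
      X ω ∉ NearlyBounded J (z - (1 - η) * m * δ) (S / L ^ 2)} ≤
      ENNReal.ofReal (Real.exp ((2 * p - η) * m)) := by
  classical
  choose V hV hVw using fun w : Fin m → ι → ℤˣ =>
    exists_unitary_orthogonal φ hm hJ fun i => signVec (w i)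
  set D : Set (Matrix ι ι ℂ) :=
    ResolventBounded ι z L G \ NearlyBounded J (z - (1 - η) * m * δ) (S / L ^ 2) with hD
  have hDm : MeasurableSet D :=
    (measurableSet_resolventBounded _ _ _).diff (measurableSet_nearlyBounded _ _ _)
  have hrot : ∀ w, Measurable fun ω => V w * X ω * star (V w) := fun w =>
    Continuous.measurable (f := fun Y : Matrix ι ι ℂ => V w * Y * star (V w))
      (by fun_prop) |>.comp hX
  refine measure_le_of_card_le (W := Fin m → ι → ℤˣ) ℙ
    (A := fun w => {ω | V w * X ω * star (V w) ∈ D}) (fun w => hrot w hDm) (fun w => ?_) ?_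
  · have h := congrArg (fun μ => μ D) (hinv (V w) (hV w))
    simp only [Measure.map_apply (hrot w) hDm, Measure.map_apply hX hDm] at h
    exact h.ge
  · intro ω s hs
    by_cases hsne : s.Nonempty
    · obtain ⟨w₀, hw₀⟩ := hsne
      have hspec : X ω ∈ ResolventBounded ι z L G := by
        have h := ResolventBounded.conj_unitary (Unitary.star_mem (hV w₀)) (hs w₀ hw₀).1
        rwa [star_star, show star (V w₀) * (V w₀ * X ω * star (V w₀)) * V w₀ =
          (star (V w₀) * V w₀) * X ω * (star (V w₀) * V w₀) by simp only [Matrix.mul_assoc],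
          Unitary.star_mul_self_of_mem (hV w₀), Matrix.one_mul, Matrix.mul_one] at h
      obtain ⟨B, hB, hBG, hBL, hBX⟩ := hspec
      refine le_trans ?_ (card_not_nearlyBounded_le (η := η) hL hδ hδL hε hM hp hS hMp hJ hV hVw hB
        hBL (by linarith) hBX)
      refine Nat.cast_le.mpr (Finset.card_le_card fun w hw => ?_)
      rw [Finset.mem_filter]
      exact ⟨Finset.mem_univ _, (hs w hw).2⟩
    · rw [Finset.not_nonempty_iff_eq_empty.mp hsne]
      simp only [Finset.card_empty, Nat.cast_zero]
      positivity

end Measurability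

section Separable

variable {n d : ℕ}

/-- The elementary tensor `x ⊗ y`. -/
def tens (x : Fin n → ℂ) (y : Fin d → ℂ) : Fin n × Fin d → ℂ := fun p => x p.1 * y p.2

/-- The matrix of `y ↦ x ⊗ y`. -/
def tensLeft (d : ℕ) (x : Fin n → ℂ) : Matrix (Fin n × Fin d) (Fin d) ℂ :=
  Matrix.of fun p j => if p.2 = j then x p.1 else 0

lemma tensLeft_mulVec (x : Fin n → ℂ) (y : Fin d → ℂ) : tensLeft d x *ᵥ y = tens x y := by
  ext p
  simp [tensLeft, tens, Matrix.mulVec, dotProduct]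

lemma tensLeft_isometry {x : Fin n → ℂ} (hx : nsq x = 1) :
    (tensLeft d x)ᴴ * tensLeft d x = 1 := by
  have h : star x ⬝ᵥ x = 1 := by rw [← ofReal_nsq, hx, Complex.ofReal_one]
  ext i j
  rw [Matrix.one_apply, Matrix.mul_apply, Fintype.sum_prod_type]
  split_ifs with hij
  · subst hij
    simpa [tensLeft, dotProduct, apply_ite] using h
  · simp only [tensLeft, Matrix.conjTranspose_apply, Matrix.of_apply]
    simp [apply_ite, Ne.symm hij]

lemma nsq_tens (x : Fin n → ℂ) (y : Fin d → ℂ) : nsq (tens x y) = nsq x * nsq y := by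
  simp [nsq_eq_sum, tens, Fintype.sum_prod_type, Finset.sum_mul_sum, mul_pow]

lemma tens_sub (x x' : Fin n → ℂ) (y : Fin d → ℂ) :
    tens (x - x') y = tens x y - tens x' y := by
  ext p; simp [tens, sub_mul]

lemma qf_one_kronecker_tens (T : Matrix (Fin d) (Fin d) ℂ) (x : Fin n → ℂ) (y : Fin d → ℂ) :
    qf ((1 : Matrix (Fin n) (Fin n) ℂ) ⊗ₖ T) (tens x y) = nsq x * qf T y := by
  have h : ((1 : Matrix (Fin n) (Fin n) ℂ) ⊗ₖ T) *ᵥ tens x y = tens x (T *ᵥ y) := by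
    ext p
    simp [Matrix.mulVec, dotProduct, tens, Fintype.sum_prod_type, Matrix.one_apply,
      Finset.mul_sum, ite_mul]
    exact Finset.sum_congr rfl fun _ _ => by ring
  have h2 : ∀ u : Fin d → ℂ, star (tens x y) ⬝ᵥ tens x u = (star x ⬝ᵥ x) * (star y ⬝ᵥ u) := by
    intro u
    simp only [dotProduct, Fintype.sum_prod_type, Finset.sum_mul_sum, tens, Pi.star_apply]
    refine Finset.sum_congr rfl fun _ _ => Finset.sum_congr rfl fun _ _ => ?_
    rw [star_mul']
    ring
  rw [qf, h, h2, ← ofReal_nsq, Complex.re_ofReal_mul, qf]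

lemma Matrix.PosSemidef.exists_conjTranspose_mul {ι : Type*} [Fintype ι] {B : Matrix ι ι ℂ}
    (hB : B.PosSemidef) : ∃ R : Matrix ι ι ℂ, B = Rᴴ * R := by
  classical
  refine ⟨specFun hB.1 Real.sqrt, ?_⟩
  rw [(isHermitian_specFun hB.1 _).eq, specFun_mul]
  conv_lhs => rw [← specFun_id hB.1]
  exact specFun_congr _ fun i => (Real.mul_self_sqrt (hB.eigenvalues_nonneg i)).symm

/-- Block-positive matrices are nonnegative on separable ones. -/
lemma trace_mul_re_nonneg_of_mem_SEP {X Y : Matrix (Fin n × Fin d) (Fin n × Fin d) ℂ}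
    (hX : X ∈ SEP n d) (hY : ∀ a y, 0 ≤ qf Y (tens a y)) : 0 ≤ (X * Y).trace.re := by
  obtain ⟨k, A, B, hA, hB, rfl⟩ := hX
  rw [Finset.sum_mul, Matrix.trace_sum, Complex.re_sum]
  refine Finset.sum_nonneg fun i _ => ?_
  obtain ⟨R, hR⟩ := (hA i).exists_conjTranspose_mul
  obtain ⟨S, hS⟩ := (hB i).exists_conjTranspose_mul
  rw [hR, hS, Matrix.mul_kronecker_mul, ← Matrix.conjTranspose_kronecker, Matrix.mul_assoc,
    Matrix.trace_mul_comm, Matrix.trace, Complex.re_sum]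
  refine Finset.sum_nonneg fun p _ => ?_
  have h : (star fun q => (R ⊗ₖ S) p q) = tens (star (R p.1)) (star (S p.2)) := by
    ext q; simp [tens]
  have h2 := hY (star (R p.1)) (star (S p.2))
  rw [← h, qf, star_star, Matrix.dotProduct_mulVec] at h2
  exact h2

lemma one_kronecker_mem_SEP {T : Matrix (Fin d) (Fin d) ℂ} (hT : T.PosSemidef) :
    (1 : Matrix (Fin n) (Fin n) ℂ) ⊗ₖ T ∈ SEP n d :=
  ⟨1, fun _ => 1, fun _ => T, fun _ => PosSemidef.one, fun _ => hT, by simp⟩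

lemma qf_add_le {ι : Type*} [Fintype ι] {X : Matrix ι ι ℂ} (hX : X.PosSemidef) {ε : ℝ}
    (hε : 0 < ε) (v h : ι → ℂ) :
    qf X (v + h) ≤ (1 + ε) * qf X v + (1 + ε⁻¹) * qf X h := by
  have h1 := hX.qf_nonneg (v - (ε⁻¹ : ℂ) • h)
  have h2 : qf X (v - (ε⁻¹ : ℂ) • h) = qf X v + ε⁻¹ ^ 2 * qf X h -
      ε⁻¹ * ((star v ⬝ᵥ X *ᵥ h).re + (star h ⬝ᵥ X *ᵥ v).re) := by
    rw [← Complex.ofReal_inv]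
    simp only [qf, Matrix.mulVec_sub, Matrix.mulVec_smul, star_sub, star_smul, sub_dotProduct,
      dotProduct_sub, smul_dotProduct, dotProduct_smul, Complex.star_def, Complex.conj_ofReal,
      smul_eq_mul, Complex.sub_re, Complex.re_ofReal_mul]
    ring
  have h3 : qf X (v + h) = qf X v + qf X h +
      ((star v ⬝ᵥ X *ᵥ h).re + (star h ⬝ᵥ X *ᵥ v).re) := by
    simp only [qf, Matrix.mulVec_add, star_add, add_dotProduct, dotProduct_add, Complex.add_re]
    ring
  rw [h2] at h1
  have h4 := mul_nonneg hε.le h1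
  rw [h3]
  have h5 : ε * (qf X v + ε⁻¹ ^ 2 * qf X h -
      ε⁻¹ * ((star v ⬝ᵥ X *ᵥ h).re + (star h ⬝ᵥ X *ᵥ v).re)) = ε * qf X v + ε⁻¹ * qf X h -
      ((star v ⬝ᵥ X *ᵥ h).re + (star h ⬝ᵥ X *ᵥ v).re) := by
    field_simp
  linarith

/-- A separable matrix which is nearly bounded by `K` in a dense set of directions has small second
moment. -/
lemma trace_sq_le_of_mem_SEP {X : Matrix (Fin n × Fin d) (Fin n × Fin d) ℂ}
    (hX : X.PosSemidef) (hsep : X ∈ SEP n d) {b K R ε : ℝ} (hb : 0 ≤ b)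
    (hXb : ∀ v, qf X v ≤ b * nsq v) (hε : 0 < ε) (hε1 : ε ≤ 1)
    {net : Finset (Fin n → ℂ)} (hunit : ∀ x ∈ net, nsq x = 1)
    (hnet : ∀ a, nsq a = 1 → ∃ x ∈ net, nsq (a - x) ≤ ε ^ 2)
    (hgood : ∀ x ∈ net, X ∈ NearlyBounded (tensLeft d x) K R) :
    (X * X).trace.re ≤ (K + 3 * ε * b) * X.trace.re + b * n * (net.card * R) := by
  choose! T hT hTtr hTX using hgood
  set T' := ∑ x ∈ net, T x with hT'
  have hT'psd : T'.PosSemidef := posSemidef_sum _ fun x hx => hT x hx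
  have hTle : ∀ x ∈ net, ∀ y, qf (T x) y ≤ qf T' y := by
    intro x hx y
    have h : qf T' y = ∑ x ∈ net, qf (T x) y := by
      simp [qf, hT', Matrix.sum_mulVec, dotProduct_sum]
    rw [h]
    exact Finset.single_le_sum (f := fun x => qf (T x) y) (fun x hx => (hT x hx).qf_nonneg y) hx
  have htr : T'.trace.re ≤ net.card * R := by
    rw [hT', Matrix.trace_sum, Complex.re_sum, ← nsmul_eq_mul]
    exact Finset.sum_le_card_nsmul _ _ _ hTtr
  set Y : Matrix (Fin n × Fin d) (Fin n × Fin d) ℂ :=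
    ((K + 3 * ε * b : ℝ) : ℂ) • 1 + (1 : Matrix (Fin n) (Fin n) ℂ) ⊗ₖ T' - X with hYdef
  have hYunit : ∀ a y, nsq a = 1 → 0 ≤ qf Y (tens a y) := by
    intro a y ha
    obtain ⟨x, hx, hax⟩ := hnet a ha
    have h1 := hTX x hx y
    rw [tensLeft_mulVec] at h1
    have h2 := qf_add_le hX hε (tens x y) (tens (a - x) y)
    rw [tens_sub, add_sub_cancel, ← tens_sub] at h2
    have hy := nsq_nonneg y
    have h3 : qf X (tens (a - x) y) ≤ b * (ε ^ 2 * nsq y) := by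
      refine (hXb _).trans ?_
      rw [nsq_tens]
      gcongr
    have h4 : qf X (tens x y) ≤ b * nsq y := by
      have := hXb (tens x y)
      rwa [nsq_tens, hunit x hx, one_mul] at this
    have h5 := hTle x hx y
    have h6 : (1 + ε⁻¹) * qf X (tens (a - x) y) ≤ (1 + ε⁻¹) * (b * (ε ^ 2 * nsq y)) := by gcongr
    have h7 : (1 + ε⁻¹) * (b * (ε ^ 2 * nsq y)) = (ε ^ 2 + ε) * (b * nsq y) := by
      field_simp
    have h8 : (ε ^ 2 + ε) * (b * nsq y) ≤ (ε + ε) * (b * nsq y) := by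
      gcongr; nlinarith
    have h9 : ε * qf X (tens x y) ≤ ε * (b * nsq y) := by gcongr
    rw [hYdef, qf_sub, qf_add, qf_smul_one, qf_one_kronecker_tens, nsq_tens, ha]
    linarith
  have hY : ∀ a y, 0 ≤ qf Y (tens a y) := by
    intro a y
    rcases (nsq_nonneg a).eq_or_lt with h0 | h0
    · have : a = 0 := by
        have h1 : star a ⬝ᵥ a = 0 := by rw [← ofReal_nsq, ← h0]; simp
        exact dotProduct_star_self_eq_zero.mp h1
      subst this
      have : tens (0 : Fin n → ℂ) y = 0 := by ext p; simp [tens]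
      simp [this, qf]
    · set r : ℝ := Real.sqrt (nsq a) with hr
      have hr0 : 0 < r := Real.sqrt_pos.mpr h0
      have h1 : tens a y = tens ((r⁻¹ : ℂ) • a) ((r : ℂ) • y) := by
        ext p
        have : (r : ℂ) ≠ 0 := by exact_mod_cast hr0.ne'
        simp only [tens, Pi.smul_apply, smul_eq_mul]
        field_simp
      rw [h1]
      refine hYunit _ _ ?_
      rw [nsq_eq_sum]
      simp only [Pi.smul_apply, smul_eq_mul, norm_mul, mul_pow, ← Finset.mul_sum, ← nsq_eq_sum]
      rw [norm_inv, Complex.norm_real, Real.norm_eq_abs, inv_pow, sq_abs, hr,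
        Real.sq_sqrt h0.le, inv_mul_cancel₀ h0.ne']
  have h1 := trace_mul_re_nonneg_of_mem_SEP hsep hY
  have h2 : 0 ≤ ((1 : Matrix (Fin n) (Fin n) ℂ) ⊗ₖ T' * ((b : ℂ) • 1 - X)).trace.re :=
    trace_mul_re_nonneg_of_mem_SEP (one_kronecker_mem_SEP hT'psd) fun a y => by
      rw [qf_sub, qf_smul_one]; linarith [hXb (tens a y)]
  rw [Matrix.mul_sub, Matrix.trace_sub, Matrix.mul_smul, Matrix.mul_one, Matrix.trace_smul,
    Matrix.trace_kronecker, Matrix.trace_one, Matrix.trace_mul_comm _ X, smul_eq_mul,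
    Complex.sub_re, Complex.re_ofReal_mul] at h2
  rw [hYdef, Matrix.mul_sub, Matrix.mul_add, Matrix.mul_smul, Matrix.mul_one, Matrix.trace_sub,
    Matrix.trace_add, Matrix.trace_smul, smul_eq_mul, Complex.sub_re, Complex.add_re,
    Complex.re_ofReal_mul] at h1
  have h3 : (((Fintype.card (Fin n) : ℕ) : ℂ) * T'.trace).re = n * T'.trace.re := by
    simp
  rw [h3] at h2
  have h4 : b * (n * T'.trace.re) ≤ b * (n * (net.card * R)) := by gcongr
  linarith

end Separable

section TrigIntegrals

open Real

lemma quad_cos_pos {r θ : ℝ} (h : sin θ ≠ 0) : 0 < 1 - 2 * r * cos θ + r ^ 2 := by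
  have := sin_sq_add_cos_sq θ
  nlinarith [sq_nonneg (r - cos θ), pow_pos (abs_pos.2 h) 2, sq_abs (sin θ)]

lemma sin_sq_le_quad_cos (r θ : ℝ) : sin θ ^ 2 ≤ 1 - 2 * r * cos θ + r ^ 2 := by
  nlinarith [sq_nonneg (r - cos θ), sin_sq_add_cos_sq θ]

lemma sin_sq_div_quad_cos_le (r θ : ℝ) : sin θ ^ 2 / (1 - 2 * r * cos θ + r ^ 2) ≤ 1 :=
  div_le_one_of_le₀ (sin_sq_le_quad_cos r θ) ((sq_nonneg _).trans (sin_sq_le_quad_cos r θ))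

lemma integral_sin_sq_div_of_abs_lt_one {r : ℝ} (hr : |r| < 1) (hr0 : r ≠ 0) :
    ∫ θ in (0 : ℝ)..π, sin θ ^ 2 / (1 - 2 * r * cos θ + r ^ 2) = π / 2 := by
  have hcos : ∀ θ, 0 < 1 - r * cos θ := fun θ => by
    have h : |r * cos θ| < 1 := by
      rw [abs_mul]
      nlinarith [abs_cos_le_one θ, abs_nonneg r, abs_nonneg (cos θ)]
    linarith [le_abs_self (r * cos θ)]
  have hD : ∀ θ, 0 < 1 - 2 * r * cos θ + r ^ 2 := fun θ => by
    nlinarith [hcos θ, sin_sq_add_cos_sq θ, sq_nonneg (r * sin θ), pow_pos (hcos θ) 2]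
  have hderiv : ∀ θ ∈ Set.uIcc (0 : ℝ) π, HasDerivAt (fun θ =>
      (-(1 - r ^ 2) * (θ + 2 * arctan (r * sin θ / (1 - r * cos θ))) + 2 * (1 + r ^ 2) * θ
        - ((1 + r ^ 2) * θ - 2 * r * sin θ)) / (4 * r ^ 2))
      (sin θ ^ 2 / (1 - 2 * r * cos θ + r ^ 2)) θ := fun θ _ => by
    have h1 : HasDerivAt (fun θ => r * sin θ / (1 - r * cos θ))
        ((r * cos θ * (1 - r * cos θ) - r * sin θ * (0 - r * (-sin θ))) / (1 - r * cos θ) ^ 2) θ :=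
      ((hasDerivAt_sin θ).const_mul r).div
        ((hasDerivAt_const θ 1).sub ((hasDerivAt_cos θ).const_mul r)) (hcos θ).ne'
    have h2 := (((((hasDerivAt_id θ).add (h1.arctan.const_mul 2)).const_mul (-(1 - r ^ 2))).add
      ((hasDerivAt_id θ).const_mul (2 * (1 + r ^ 2)))).sub
      (((hasDerivAt_id θ).const_mul (1 + r ^ 2)).sub
        ((hasDerivAt_sin θ).const_mul (2 * r)))).div_const (4 * r ^ 2)
    refine h2.congr_deriv ?_
    have hq : 1 + (r * sin θ / (1 - r * cos θ)) ^ 2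
        = (1 - 2 * r * cos θ + r ^ 2) / (1 - r * cos θ) ^ 2 := by
      have := (hcos θ).ne'
      field_simp
      linear_combination r ^ 2 * sin_sq_add_cos_sq θ
    obtain ⟨k, hk⟩ : ∃ k, k = 1 / (1 + (r * sin θ / (1 - r * cos θ)) ^ 2) *
        ((r * cos θ * (1 - r * cos θ) - r * sin θ * (0 - r * (-sin θ))) / (1 - r * cos θ) ^ 2) :=
      ⟨_, rfl⟩
    have hkD : k * (1 - 2 * r * cos θ + r ^ 2)
        = r * cos θ * (1 - r * cos θ) - r * sin θ * (0 - r * (-sin θ)) := by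
      rw [hk, hq, one_div_div, mul_comm (_ / _) (_ / _), div_mul_div_cancel₀ (pow_pos (hcos θ) 2).ne',
        div_mul_cancel₀ _ (hD θ).ne']
    rw [← hk, div_eq_div_iff (by positivity) (hD θ).ne']
    linear_combination (-(1 - r ^ 2) * 2) * hkD
      + (2 * (1 - r ^ 2) * r ^ 2 - 4 * r ^ 2) * sin_sq_add_cos_sq θ
  rw [intervalIntegral.integral_eq_sub_of_hasDerivAt hderiv]
  · simp
    field_simp
    ring
  · refine Continuous.intervalIntegrable ?_ _ _
    exact (by fun_prop : Continuous fun θ => sin θ ^ 2).div (by fun_prop) fun θ => (hD θ).ne.symm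

/-- The integral of `sin² θ / |1 - r e^{iθ}|²` over a half period. -/
lemma integral_sin_sq_div {r : ℝ} (hr0 : r ≠ 0) :
    ∫ θ in (0 : ℝ)..π, sin θ ^ 2 / (1 - 2 * r * cos θ + r ^ 2) = π / (2 * max 1 (r ^ 2)) := by
  rcases lt_trichotomy |r| 1 with h | h | h
  · rw [integral_sin_sq_div_of_abs_lt_one h hr0,
      max_eq_left ((sq_lt_one_iff_abs_lt_one r).2 h).le, mul_one]
  · have hr2 : r ^ 2 = 1 := by rw [← sq_abs, h, one_pow]
    have : ∫ θ in (0 : ℝ)..π, sin θ ^ 2 / (1 - 2 * r * cos θ + r ^ 2)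
        = ∫ θ in (0 : ℝ)..π, (1 / 2 + r / 2 * cos θ) := by
      rw [intervalIntegral.integral_of_le pi_pos.le, intervalIntegral.integral_of_le pi_pos.le,
        integral_Ioc_eq_integral_Ioo, integral_Ioc_eq_integral_Ioo]
      refine setIntegral_congr_fun measurableSet_Ioo fun θ hθ => ?_
      have hD := (quad_cos_pos (r := r) (sin_pos_of_mem_Ioo hθ).ne').ne'
      rw [div_eq_iff hD]
      linear_combination sin_sq_add_cos_sq θ + (cos θ ^ 2 - 1 / 2 - r / 2 * cos θ) * hr2
    rw [this, intervalIntegral.integral_add (by simp)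
      (Continuous.intervalIntegrable (by fun_prop) _ _)]
    simp [hr2]
    ring
  · have hinv : |r⁻¹| < 1 := by rw [abs_inv]; exact inv_lt_one_of_one_lt₀ h
    have := integral_sin_sq_div_of_abs_lt_one hinv (inv_ne_zero hr0)
    have hcongr : ∀ θ, sin θ ^ 2 / (1 - 2 * r * cos θ + r ^ 2)
        = (r ^ 2)⁻¹ * (sin θ ^ 2 / (1 - 2 * r⁻¹ * cos θ + r⁻¹ ^ 2)) := fun θ => by
      have : 1 - 2 * r * cos θ + r ^ 2 = r ^ 2 * (1 - 2 * r⁻¹ * cos θ + r⁻¹ ^ 2) := by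
        field_simp
        ring
      rw [this, div_mul_eq_div_div, div_right_comm, div_eq_inv_mul]
    simp_rw [hcongr]
    rw [intervalIntegral.integral_const_mul, this,
      max_eq_right ((one_lt_sq_iff_one_lt_abs r).2 h).le]
    field_simp

lemma integral_sin_sq_zero_pi : ∫ θ in (0 : ℝ)..π, sin θ ^ 2 = π / 2 := by
  simp [integral_sin_sq]

lemma integral_sin_sq_mul_cos_zero_pi : ∫ θ in (0 : ℝ)..π, sin θ ^ 2 * cos θ = 0 := by
  simp

end TrigIntegrals

section MarcenkoPastur

open Real

/-- The parametrization of the support of the Marčenko–Pastur law by the half circle. -/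
def mpParam (s θ : ℝ) : ℝ := 1 + 2 * s * cos θ + s ^ 2

lemma mpParam_eq (s θ : ℝ) : mpParam s θ = 1 - 2 * (-s) * cos θ + (-s) ^ 2 := by
  rw [mpParam]; ring

lemma continuous_mpParam (s : ℝ) : Continuous (mpParam s) := by
  unfold mpParam; fun_prop

lemma mpParam_pos (s : ℝ) {θ : ℝ} (hθ : θ ∈ Set.Ioo 0 π) : 0 < mpParam s θ := by
  rw [mpParam_eq]; exact quad_cos_pos (sin_pos_of_mem_Ioo hθ).ne'

lemma mpParam_mem_Icc {s : ℝ} (hs : 0 ≤ s) (θ : ℝ) : mpParam s θ ∈ Set.Icc 0 ((1 + s) ^ 2) := by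
  constructor
  · rw [mpParam_eq]; exact (sq_nonneg _).trans (sin_sq_le_quad_cos _ _)
  · unfold mpParam
    nlinarith [cos_le_one θ]

lemma hasDerivAt_mpParam (s θ : ℝ) : HasDerivAt (mpParam s) (2 * s * (-sin θ)) θ := by
  unfold mpParam
  exact (((hasDerivAt_cos θ).const_mul (2 * s)).const_add 1).add_const (s ^ 2)

lemma injOn_mpParam {s : ℝ} (hs : 0 < s) : Set.InjOn (mpParam s) (Set.Ioo 0 π) := by
  intro θ hθ φ hφ h
  refine injOn_cos (Set.Ioo_subset_Icc_self hθ) (Set.Ioo_subset_Icc_self hφ) ?_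
  have h' : 2 * s * cos θ = 2 * s * cos φ := by unfold mpParam at h; linarith
  exact mul_left_cancel₀ (by positivity) h'

lemma image_mpParam {s : ℝ} (hs : 0 < s) :
    mpParam s '' Set.Ioo 0 π = Set.Ioo ((1 - s) ^ 2) ((1 + s) ^ 2) := by
  ext x
  constructor
  · rintro ⟨θ, hθ, rfl⟩
    have h1 : cos θ < 1 := by
      simpa using cos_lt_cos_of_nonneg_of_le_pi le_rfl hθ.2.le hθ.1
    have h2 : -1 < cos θ := by
      simpa using cos_lt_cos_of_nonneg_of_le_pi hθ.1.le le_rfl hθ.2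
    unfold mpParam
    constructor <;> nlinarith
  · rintro ⟨h1, h2⟩
    have h3 : -1 < (x - 1 - s ^ 2) / (2 * s) := by
      rw [lt_div_iff₀ (by positivity)]; linarith
    have h4 : (x - 1 - s ^ 2) / (2 * s) < 1 := by
      rw [div_lt_one (by positivity)]; linarith
    refine ⟨arccos ((x - 1 - s ^ 2) / (2 * s)), ⟨arccos_pos.2 h4, arccos_lt_pi.2 h3⟩, ?_⟩
    rw [mpParam, cos_arccos h3.le h4.le]
    field_simp
    ring

/-- The density of the absolutely continuous part of the Marčenko–Pastur law. -/
def mpDensity (s x : ℝ) : ℝ :=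
  √(((1 + s) ^ 2 - x) * (x - (1 - s) ^ 2)) / (2 * π * x)

lemma mpDensity_mpParam {s θ : ℝ} (hs : 0 < s) (hθ : θ ∈ Set.Ioo 0 π) (y : ℝ) :
    |2 * s * (-sin θ)| • (mpDensity s (mpParam s θ) * y)
      = 2 * s ^ 2 / π * (y * (sin θ ^ 2 / mpParam s θ)) := by
  have hsin := sin_pos_of_mem_Ioo hθ
  have hx := (mpParam_pos s hθ).ne'
  have h : ((1 + s) ^ 2 - mpParam s θ) * (mpParam s θ - (1 - s) ^ 2) = (2 * s * sin θ) ^ 2 := by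
    unfold mpParam
    linear_combination (-4 * s ^ 2) * sin_sq_add_cos_sq θ
  rw [mpDensity, h, sqrt_sq (by positivity), mul_neg, abs_neg, abs_of_pos (by positivity),
    smul_eq_mul]
  field_simp

lemma integrableOn_mpParam {s : ℝ} (hs : 0 < s) {f : ℝ → ℝ}
    (hf : ContinuousOn f (Set.Icc 0 ((1 + s) ^ 2))) :
    IntegrableOn (fun θ => f (mpParam s θ) * (sin θ ^ 2 / mpParam s θ)) (Set.Ioo 0 π) := by
  obtain ⟨C, hC⟩ := isCompact_Icc.exists_bound_of_continuousOn hf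
  have hfc : Continuous fun θ => f (mpParam s θ) :=
    hf.comp_continuous (continuous_mpParam s) (mpParam_mem_Icc hs.le)
  refine IntegrableOn.of_bound (by simp) ?_ C ?_
  · refine ContinuousOn.aestronglyMeasurable ?_ measurableSet_Ioo
    exact hfc.continuousOn.mul (ContinuousOn.div (by fun_prop) (continuous_mpParam s).continuousOn
      fun θ hθ => (mpParam_pos s hθ).ne')
  · refine ae_restrict_of_forall_mem measurableSet_Ioo fun θ hθ => ?_
    have h1 := hC _ (mpParam_mem_Icc hs.le θ)
    have h2 : |sin θ ^ 2 / mpParam s θ| ≤ 1 := by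
      rw [abs_of_nonneg (div_nonneg (sq_nonneg _) (mpParam_pos s hθ).le), mpParam_eq]
      exact sin_sq_div_quad_cos_le _ _
    rw [norm_mul, Real.norm_eq_abs (_ / _)]
    exact (mul_le_of_le_one_right (norm_nonneg _) h2).trans h1

lemma integrable_and_integral_MP {c : ℝ} (hc : 0 < c) {f : ℝ → ℝ}
    (hf : ContinuousOn f (Set.Icc 0 ((1 + √c) ^ 2))) :
    Integrable f (MP c) ∧ ∫ x, f x ∂(MP c) = max (1 - c) 0 * f 0 +
      2 * c / π * ∫ θ in (0 : ℝ)..π, f (mpParam (√c) θ) * (sin θ ^ 2 / mpParam (√c) θ) := by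
  have hs : 0 < √c := sqrt_pos.2 hc
  set I := Set.Ioo ((1 - √c) ^ 2) ((1 + √c) ^ 2)
  set ρ : ℝ → ENNReal := fun x => ENNReal.ofReal (I.indicator (mpDensity (√c)) x)
  have hMP : MP c = ENNReal.ofReal (max (1 - c) 0) • Measure.dirac (0 : ℝ)
      + volume.withDensity ρ := rfl
  have hρ : Measurable ρ := by
    refine ENNReal.measurable_ofReal.comp (Measurable.indicator ?_ measurableSet_Ioo)
    unfold mpDensity
    fun_prop
  have hρlt : ∀ᵐ x, ρ x < ⊤ := ae_of_all _ fun x => ENNReal.ofReal_lt_top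
  have htoReal : ∀ x, (ρ x).toReal • f x = I.indicator (fun x => mpDensity (√c) x * f x) x := by
    intro x
    by_cases hx : x ∈ I
    · have : 0 ≤ mpDensity (√c) x :=
        div_nonneg (sqrt_nonneg _) (mul_nonneg (by positivity) ((sq_nonneg _).trans hx.1.le))
      simp [ρ, hx, ENNReal.toReal_ofReal this]
    · simp [ρ, hx]
  have hI : mpParam (√c) '' Set.Ioo 0 π = I := image_mpParam hs
  have hderiv : ∀ θ ∈ Set.Ioo 0 π, HasDerivWithinAt (mpParam (√c)) (2 * √c * (-sin θ))
      (Set.Ioo 0 π) θ := fun θ _ => (hasDerivAt_mpParam _ θ).hasDerivWithinAt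
  have hintegral : IntegrableOn (fun x => mpDensity (√c) x * f x) I := by
    rw [← hI, integrableOn_image_iff_integrableOn_abs_deriv_smul measurableSet_Ioo
      hderiv (injOn_mpParam hs), integrableOn_congr_fun
      (fun θ hθ => mpDensity_mpParam hs hθ _) measurableSet_Ioo]
    exact (integrableOn_mpParam hs hf).const_mul _
  have hint1 : Integrable f (ENNReal.ofReal (max (1 - c) 0) • Measure.dirac (0 : ℝ)) :=
    (integrable_dirac (by simp)).smul_measure ENNReal.ofReal_ne_top
  have hint2 : Integrable f (volume.withDensity ρ) := by
    rw [integrable_withDensity_iff_integrable_smul' hρ hρlt]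
    simp_rw [htoReal]
    exact (integrable_indicator_iff measurableSet_Ioo).2 hintegral
  refine ⟨hMP ▸ hint1.add_measure hint2, ?_⟩
  rw [hMP, integral_add_measure hint1 hint2, integral_smul_measure, integral_dirac,
    integral_withDensity_eq_integral_toReal_smul hρ hρlt]
  simp_rw [htoReal]
  rw [integral_indicator measurableSet_Ioo, ← image_mpParam hs,
    integral_image_eq_integral_abs_deriv_smul measurableSet_Ioo hderiv (injOn_mpParam hs),
    setIntegral_congr_fun measurableSet_Ioo fun θ hθ => mpDensity_mpParam hs hθ _,
    integral_const_mul, sq_sqrt hc.le, intervalIntegral.integral_of_le pi_pos.le,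
    integral_Ioc_eq_integral_Ioo, ENNReal.toReal_ofReal (le_max_right _ _), smul_eq_mul]

lemma intervalIntegrable_mpParam {s : ℝ} (hs : 0 < s) {f : ℝ → ℝ}
    (hf : ContinuousOn f (Set.Icc 0 ((1 + s) ^ 2))) :
    IntervalIntegrable (fun θ => f (mpParam s θ) * (sin θ ^ 2 / mpParam s θ)) volume 0 π := by
  rw [intervalIntegrable_iff_integrableOn_Ioo_of_le pi_pos.le]
  exact integrableOn_mpParam hs hf

lemma intervalIntegral_congr_Ioo {f g : ℝ → ℝ} (h : ∀ θ ∈ Set.Ioo 0 π, f θ = g θ) :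
    ∫ θ in (0 : ℝ)..π, f θ = ∫ θ in (0 : ℝ)..π, g θ := by
  rw [intervalIntegral.integral_of_le pi_pos.le, intervalIntegral.integral_of_le pi_pos.le,
    integral_Ioc_eq_integral_Ioo, integral_Ioc_eq_integral_Ioo]
  exact setIntegral_congr_fun measurableSet_Ioo h

lemma integral_mpParam_inv {s : ℝ} (hs : 0 < s) :
    ∫ θ in (0 : ℝ)..π, sin θ ^ 2 / mpParam s θ = π / (2 * max 1 (s ^ 2)) := by
  simp_rw [mpParam_eq]
  rw [integral_sin_sq_div (neg_ne_zero.2 hs.ne'), neg_sq]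

lemma max_add_div_max {c : ℝ} (hc : 0 < c) : max (1 - c) 0 + c / max 1 c = 1 := by
  rcases le_total c 1 with h | h
  · rw [max_eq_left (by linarith), max_eq_left h]; ring
  · rw [max_eq_right (by linarith), max_eq_right h, div_self hc.ne']; ring

lemma integral_one_MP {c : ℝ} (hc : 0 < c) : ∫ _, (1 : ℝ) ∂(MP c) = 1 := by
  rw [(integrable_and_integral_MP hc continuousOn_const).2]
  simp only [one_mul, integral_mpParam_inv (sqrt_pos.2 hc), sq_sqrt hc.le]
  have := max_add_div_max hc
  rw [show 2 * c / π * (π / (2 * max 1 c)) = c / max 1 c by field_simp]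
  linarith

lemma integral_id_MP {c : ℝ} (hc : 0 < c) : ∫ x, x ∂(MP c) = c := by
  rw [(integrable_and_integral_MP (f := fun x => x) hc continuousOn_id).2, intervalIntegral_congr_Ioo
    (g := fun θ => sin θ ^ 2) fun θ hθ => mul_div_cancel₀ _ (mpParam_pos _ hθ).ne',
    integral_sin_sq_zero_pi]
  simp
  field_simp

lemma integral_sq_MP {c : ℝ} (hc : 0 < c) : ∫ x, x ^ 2 ∂(MP c) = c + c ^ 2 := by
  rw [(integrable_and_integral_MP hc (by fun_prop)).2, intervalIntegral_congr_Ioo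
    (g := fun θ => (1 + c) * sin θ ^ 2 + 2 * √c * (sin θ ^ 2 * cos θ)),
    intervalIntegral.integral_add (Continuous.intervalIntegrable (by fun_prop) _ _)
      (Continuous.intervalIntegrable (by fun_prop) _ _), intervalIntegral.integral_const_mul,
    intervalIntegral.integral_const_mul, integral_sin_sq_zero_pi, integral_sin_sq_mul_cos_zero_pi]
  · simp
    field_simp
  · intro θ hθ
    have h := (mpParam_pos (√c) hθ).ne'
    have h' : mpParam (√c) θ = 1 + 2 * √c * cos θ + c := by rw [mpParam, sq_sqrt hc.le]
    rw [show mpParam (√c) θ ^ 2 * (sin θ ^ 2 / mpParam (√c) θ) = mpParam (√c) θ * sin θ ^ 2 by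
      field_simp, h']
    ring

/-- The Cauchy transform of the Marčenko–Pastur law at the point `(1 + √c t)(1 + √c / t)`. -/
lemma integral_inv_sub_MP {c t : ℝ} (hc : 0 < c) (ht : 1 < t) :
    ∫ x, ((1 + √c * t) * (1 + √c / t) - x)⁻¹ ∂(MP c) = (1 + √c * t)⁻¹ := by
  have hs : 0 < √c := sqrt_pos.2 hc
  have ht0 : 0 < t := by linarith
  set s := √c
  set z := (1 + s * t) * (1 + s / t) with hz
  have hz0 : 0 < z := by positivity
  have hzx : ∀ θ, z - mpParam s θ = s / t * (1 - 2 * t * cos θ + t ^ 2) := fun θ => by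
    rw [hz, mpParam]
    field_simp
    ring
  have hzb : (1 + s) ^ 2 < z := by
    have h : z - (1 + s) ^ 2 = s * (t - 1) ^ 2 / t := by rw [hz]; field_simp; ring
    have : 0 < s * (t - 1) ^ 2 / t := by
      have := sub_pos.2 ht
      positivity
    linarith
  have hcont : ContinuousOn (fun x => (z - x)⁻¹) (Set.Icc 0 ((1 + s) ^ 2)) :=
    ContinuousOn.inv₀ (by fun_prop) fun x hx => by linarith [hx.2]
  have hintegral : IntervalIntegrable (fun θ => sin θ ^ 2 / (1 - 2 * t * cos θ + t ^ 2)) volume 0 π := by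
    refine (ContinuousOn.div (by fun_prop) (by fun_prop) fun θ _ => ?_).intervalIntegrable
    nlinarith [cos_le_one θ, sq_pos_of_pos (sub_pos.2 ht)]
  rw [(integrable_and_integral_MP hc hcont).2, intervalIntegral_congr_Ioo
    (g := fun θ => z⁻¹ * (1 * (sin θ ^ 2 / mpParam s θ))
      + t / (s * z) * (sin θ ^ 2 / (1 - 2 * t * cos θ + t ^ 2))),
    intervalIntegral.integral_add
      ((intervalIntegrable_mpParam hs continuousOn_const).const_mul _) (hintegral.const_mul _),
    intervalIntegral.integral_const_mul, intervalIntegral.integral_const_mul,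
    intervalIntegral.integral_const_mul, integral_sin_sq_div ht0.ne', max_eq_right (by nlinarith : 1 ≤ t ^ 2)]
  · simp_rw [one_mul]
    rw [integral_mpParam_inv hs, show s ^ 2 = c from sq_sqrt hc.le]
    rw [sub_zero]
    have h1 : max (1 - c) 0 * z⁻¹ + 2 * c / π *
        (z⁻¹ * (π / (2 * max 1 c)) + t / (s * z) * (π / (2 * t ^ 2)))
        = z⁻¹ * (max (1 - c) 0 + c / max 1 c + c / (s * t)) := by
      field_simp
      ring
    have h2 : c / (s * t) = s / t := by
      rw [show c = s ^ 2 from (sq_sqrt hc.le).symm]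
      field_simp
    rw [h1, max_add_div_max hc, h2, hz]
    field_simp
  · intro θ hθ
    have h := (mpParam_pos s hθ).ne'
    have hD := (quad_cos_pos (r := t) (sin_pos_of_mem_Ioo hθ).ne').ne'
    have hsum : z = s / t * (1 - 2 * t * cos θ + t ^ 2) + mpParam s θ := by linarith [hzx θ]
    rw [hzx]
    have hz1 : z ≠ 0 := hz0.ne'
    clear_value z
    generalize 1 - 2 * t * cos θ + t ^ 2 = D at *
    generalize mpParam s θ = x at *
    field_simp
    rw [hsum]
    field_simp

lemma MP_compl_Icc {c : ℝ} : MP c (Set.Icc 0 ((1 + √c) ^ 2))ᶜ = 0 := by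
  rw [MP, Measure.add_apply, Measure.smul_apply, withDensity_apply _ measurableSet_Icc.compl,
    Measure.dirac_apply' _ measurableSet_Icc.compl, Set.indicator_of_notMem (by simp; positivity),
    smul_zero, zero_add, setLIntegral_congr_fun (g := 0) measurableSet_Icc.compl]
  · simp
  · intro x hx
    have : x ∉ Set.Ioo ((1 - √c) ^ 2) ((1 + √c) ^ 2) :=
      fun h => hx ⟨(sq_nonneg _).trans h.1.le, h.2.le⟩
    simp [this]

lemma msupport_MP_subset {c : ℝ} : msupport (MP c) ⊆ Set.Icc 0 ((1 + √c) ^ 2) := by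
  intro x hx
  by_contra h
  exact (hx _ isClosed_Icc.isOpen_compl h).ne' MP_compl_Icc

end MarcenkoPastur

section SpectralInput

variable {ι : Type*} [Fintype ι] [DecidableEq ι]

lemma qf_le_opNorm (A : Matrix ι ι ℂ) (v : ι → ℂ) : qf A v ≤ opNorm A * nsq v := by
  set w : EuclideanSpace ℂ ι := WithLp.toLp 2 v
  have h1 : qf A v = (inner ℂ w (Matrix.toEuclideanCLM (𝕜 := ℂ) (n := ι) A w)).re := by
    simp [qf, w, EuclideanSpace.inner_eq_star_dotProduct, dotProduct_comm]
  have h2 : nsq v = ‖w‖ * ‖w‖ := by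
    rw [← sq, EuclideanSpace.norm_sq_eq, nsq_eq_sum]
  rw [h1, h2]
  calc _ ≤ ‖w‖ * ‖Matrix.toEuclideanCLM (𝕜 := ℂ) (n := ι) A w‖ :=
        (Complex.re_le_norm _).trans (norm_inner_le_norm _ _)
    _ ≤ ‖w‖ * (opNorm A * ‖w‖) := by
        gcongr
        exact ContinuousLinearMap.le_opNorm _ _
    _ = _ := by ring

lemma polyApply_eq_specFun {A : Matrix ι ι ℂ} (hA : A.IsHermitian) (P : ℝ[X]) :
    polyApply P A = specFun hA fun x => P.eval x := by
  have hconst : ∀ r : ℝ, polyApply (Polynomial.C r) A = specFun hA fun _ => r := fun r => by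
    rw [← mul_one r, show (fun _ : ℝ => r * 1) = fun x => r * (fun _ : ℝ => (1 : ℝ)) x from rfl,
      ← specFun_smul, specFun_one]
    simp [polyApply, Algebra.algebraMap_eq_smul_one]
  induction P using Polynomial.induction_on' with
  | add p q hp hq =>
    rw [polyApply] at hp hq ⊢
    simp only [Polynomial.map_add, map_add, hp, hq, specFun_add, Polynomial.eval_add]
  | monomial k r =>
    induction k with
    | zero => simpa using hconst r
    | succ k ih =>
      rw [polyApply] at ih ⊢
      rw [← Polynomial.monomial_mul_X, Polynomial.map_mul, map_mul, ih, Polynomial.map_X,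
        Polynomial.aeval_X]
      conv_lhs => rhs; rw [← specFun_id hA]
      rw [specFun_mul]
      simp [pow_succ, mul_assoc]

lemma re_trace_polyApply {A : Matrix ι ι ℂ} (hA : A.IsHermitian) (P : ℝ[X]) :
    (polyApply P A).trace.re = ∑ i, P.eval (hA.eigenvalues i) := by
  rw [polyApply_eq_specFun hA, trace_specFun, Complex.ofReal_re]

lemma mem_resolventBounded {A : Matrix ι ι ℂ} (hA : A.PosSemidef) {b z L G : ℝ} (hbz : b < z)
    (hAb : ∀ v, qf A v ≤ b * nsq v) (hL : (z - b)⁻¹ ≤ L) {P : ℝ[X]}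
    (hP : ∀ x ∈ Set.Icc 0 b, (z - x)⁻¹ ≤ P.eval x) (hG : (polyApply P A).trace.re ≤ G) :
    A ∈ ResolventBounded ι z L G := by
  have hev : ∀ i, hA.1.eigenvalues i ∈ Set.Icc 0 b := fun i =>
    ⟨hA.eigenvalues_nonneg i, eigenvalues_le_of_qf_le hA.1 hAb i⟩
  have hpos : ∀ i, 0 < z - hA.1.eigenvalues i := fun i => by linarith [(hev i).2]
  refine ⟨specFun hA.1 fun x => (z - x)⁻¹, posSemidef_specFun _ fun i => (inv_pos.2 (hpos i)).le,
    ?_, qf_specFun_le _ fun i => ?_, ?_⟩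
  · rw [re_trace_polyApply hA.1] at hG
    rw [trace_specFun, Complex.ofReal_re]
    exact (Finset.sum_le_sum fun i _ => hP _ (hev i)).trans hG
  · refine le_trans ?_ hL
    exact inv_anti₀ (sub_pos.2 hbz) (by linarith [(hev i).2])
  · have h : (z : ℂ) • 1 - A = specFun hA.1 fun x => z * 1 + (-1) * x := by
      rw [← specFun_add, ← specFun_smul, ← specFun_smul, specFun_one, specFun_id]
      simp [sub_eq_add_neg]
    rw [h, specFun_mul, ← specFun_one hA.1]
    refine specFun_congr _ fun i => ?_
    have := (hpos i).ne'
    rw [mul_one, neg_one_mul, ← sub_eq_add_neg, inv_mul_cancel₀ this]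

lemma exists_polynomial_ge_inv_sub {c b z e : ℝ} (hc : 0 < c) (hb : (1 + √c) ^ 2 ≤ b)
    (hbz : b < z) (he : 0 < e) :
    ∃ P : ℝ[X], (∀ x ∈ Set.Icc 0 b, (z - x)⁻¹ ≤ P.eval x) ∧
      ∫ x, P.eval x ∂(MP c) < ∫ x, (z - x)⁻¹ ∂(MP c) + e := by
  have hcont : ContinuousOn (fun x => (z - x)⁻¹ + e / 3) (Set.Icc 0 b) :=
    (ContinuousOn.inv₀ (by fun_prop) fun x hx => by linarith [hx.2]).add continuousOn_const
  have hcont' : ContinuousOn (fun x => (z - x)⁻¹) (Set.Icc 0 ((1 + √c) ^ 2)) :=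
    ContinuousOn.inv₀ (by fun_prop) fun x hx => by linarith [hx.2]
  obtain ⟨P, hP⟩ := exists_polynomial_near_of_continuousOn 0 b _ hcont (e / 3) (by positivity)
  refine ⟨P, fun x hx => by linarith [(abs_lt.1 (hP x hx)).1], ?_⟩
  have hi1 := (integrable_and_integral_MP hc hcont').1
  have hi2 := (integrable_and_integral_MP hc (f := fun _ => (1 : ℝ)) continuousOn_const).1
  have hle : ∫ x, P.eval x ∂(MP c) ≤ ∫ x, ((z - x)⁻¹ + 2 * e / 3 * 1) ∂(MP c) := by
    refine integral_mono_ae (integrable_and_integral_MP hc P.continuous.continuousOn).1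
      (hi1.add (hi2.const_mul _)) ?_
    have : ∀ᵐ x ∂(MP c), x ∈ Set.Icc 0 ((1 + √c) ^ 2) := MP_compl_Icc
    filter_upwards [this] with x hx
    linarith [(abs_lt.1 (hP x ⟨hx.1, hx.2.trans hb⟩)).2]
  rw [integral_add hi1 (hi2.const_mul _), integral_const_mul, integral_one_MP hc] at hle
  linarith

/-- The conditions on a matrix which, together, exclude separability. -/
structure SpectrallyClose {n d : ℕ} (c z b L g e : ℝ)
    (A : Matrix (Fin n × Fin d) (Fin n × Fin d) ℂ) : Prop where
  qf_le : ∀ v, qf A v ≤ b * nsq v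
  resolvent : A ∈ ResolventBounded (Fin n × Fin d) z L (g * (n * d : ℕ))
  trace_le : A.trace.re ≤ (c + e) * (n * d : ℕ)
  trace_sq_ge : (c + c ^ 2 - e) * (n * d : ℕ) ≤ (A * A).trace.re

lemma eventually_spectrallyClose {n : ℕ} (hn : 0 < n) {c z b L g e : ℝ} (hc : 0 < c)
    (hb : (1 + √c) ^ 2 < b) (hbz : b < z) (hL : (z - b)⁻¹ ≤ L)
    (hg : ∫ x, (z - x)⁻¹ ∂(MP c) < g) (he : 0 < e)
    {A : (d : ℕ) → Matrix (Fin n × Fin d) (Fin n × Fin d) ℂ} (hA : ∀ d, (A d).PosSemidef)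
    (hconv : ∀ P : ℝ[X],
      Tendsto (fun d : ℕ => ((n : ℂ) * (d : ℂ))⁻¹ * (polyApply P (A d)).trace) atTop
        (𝓝 ((∫ x, P.eval x ∂(MP c) : ℝ) : ℂ)) ∧
      Tendsto (fun d : ℕ => opNorm (polyApply P (A d))) atTop
        (𝓝 (sSup ((fun x => |P.eval x|) '' msupport (MP c))))) :
    ∀ᶠ d in atTop, SpectrallyClose c z b L g e (A d) := by
  have htr : ∀ P : ℝ[X], Tendsto
      (fun d : ℕ => (polyApply P (A d)).trace.re / (n * d : ℕ)) atTop
      (𝓝 (∫ x, P.eval x ∂(MP c))) := fun P => by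
    have h := (Complex.continuous_re.tendsto _).comp (hconv P).1
    rw [Complex.ofReal_re] at h
    refine h.congr fun d => ?_
    rw [Function.comp_apply, ← Nat.cast_mul, ← Complex.ofReal_natCast, ← Complex.ofReal_inv,
      Complex.re_ofReal_mul, inv_mul_eq_div]
  have hpos : ∀ᶠ d : ℕ in atTop, (0 : ℝ) < (n * d : ℕ) := by
    filter_upwards [eventually_gt_atTop 0] with d hd
    exact_mod_cast Nat.mul_pos hn hd
  have hsup : sSup ((fun x => |(Polynomial.X : ℝ[X]).eval x|) '' msupport (MP c)) < b := by
    refine lt_of_le_of_lt (Real.sSup_le ?_ (sq_nonneg (1 + √c))) hb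
    rintro _ ⟨x, hx, rfl⟩
    have := msupport_MP_subset hx
    simpa [abs_of_nonneg this.1] using this.2
  obtain ⟨P, hP, hPint⟩ := exists_polynomial_ge_inv_sub hc hb.le hbz (sub_pos.2 hg)
  have h1 := (hconv Polynomial.X).2.eventually_lt_const hsup
  have h2 := (htr P).eventually_lt_const (u := g) (by linarith)
  have h3 := (htr Polynomial.X).eventually_lt_const (u := c + e)
    (by simp only [Polynomial.eval_X]; rw [integral_id_MP hc]; linarith)
  have h4 := (htr (Polynomial.X ^ 2)).eventually_const_lt (u := c + c ^ 2 - e)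
    (by simp only [Polynomial.eval_X, Polynomial.eval_pow]; rw [integral_sq_MP hc]; linarith)
  filter_upwards [hpos, h1, h2, h3, h4] with d hd h1 h2 h3 h4
  have hX : polyApply Polynomial.X (A d) = A d := by simp [polyApply]
  have hX2 : polyApply (Polynomial.X ^ 2) (A d) = A d * A d := by simp [polyApply, sq]
  rw [hX] at h1 h3
  rw [hX2, lt_div_iff₀ hd] at h4
  rw [div_lt_iff₀ hd] at h2 h3
  have hqf : ∀ v, qf (A d) v ≤ b * nsq v := fun v =>
    (qf_le_opNorm _ v).trans (mul_le_mul_of_nonneg_right h1.le (nsq_nonneg v))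
  exact ⟨hqf, mem_resolventBounded (hA d) hbz hqf hL hP h2.le, h3.le, h4.le⟩

end SpectralInput

section Asymptotics

lemma exists_finite_net (n : ℕ) {ε : ℝ} (hε : 0 < ε) :
    ∃ net : Finset (Fin n → ℂ), (∀ x ∈ net, nsq x = 1) ∧
      ∀ a, nsq a = 1 → ∃ x ∈ net, nsq (a - x) ≤ ε ^ 2 := by
  have hcont : Continuous (nsq : (Fin n → ℂ) → ℝ) := by
    unfold nsq
    fun_prop
  have hcompact : IsCompact {a : Fin n → ℂ | nsq a = 1} := by
    refine Metric.isCompact_of_isClosed_isBounded (isClosed_eq hcont continuous_const) ?_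
    refine (Metric.isBounded_closedBall (x := (0 : Fin n → ℂ)) (r := 1)).subset fun a ha => ?_
    rw [mem_closedBall_zero_iff, pi_norm_le_iff_of_nonneg zero_le_one]
    intro i
    have h : ‖a i‖ ^ 2 ≤ 1 := by
      rw [← (show nsq a = 1 from ha), nsq_eq_sum]
      exact Finset.single_le_sum (f := fun i => ‖a i‖ ^ 2) (fun i _ => sq_nonneg _)
        (Finset.mem_univ i)
    exact (sq_le_one_iff₀ (norm_nonneg _)).1 h
  obtain ⟨t, hts, htfin, hcover⟩ := hcompact.finite_cover_balls
    (div_pos hε (Nat.cast_add_one_pos n : (0 : ℝ) < n + 1))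
  refine ⟨htfin.toFinset, fun x hx => hts (htfin.mem_toFinset.1 hx), fun a ha => ?_⟩
  obtain ⟨x, hx, hax⟩ := Set.mem_iUnion₂.1 (hcover ha)
  refine ⟨x, htfin.mem_toFinset.2 hx, ?_⟩
  rw [Metric.mem_ball, dist_eq_norm] at hax
  have hn : (0 : ℝ) < n + 1 := Nat.cast_add_one_pos n
  calc nsq (a - x) = ∑ i, ‖(a - x) i‖ ^ 2 := nsq_eq_sum _
    _ ≤ ∑ _i : Fin n, (ε / (n + 1)) ^ 2 := by
        gcongr with i
        exact (norm_le_pi_norm _ i).trans hax.le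
    _ = n / (n + 1) ^ 2 * ε ^ 2 := by simp; field_simp
    _ ≤ 1 * ε ^ 2 := by
        gcongr
        rw [div_le_one (by positivity)]
        nlinarith [(Nat.cast_nonneg n : (0 : ℝ) ≤ n)]
    _ = ε ^ 2 := one_mul _

/-- The matrices which are spectrally close to the Marčenko–Pastur law and whose compressions along
the vectors of a net are nearly bounded. -/
def regularSet (n d : ℕ) (c z b L g e K R : ℝ) (net : Finset (Fin n → ℂ)) :
    Set (Matrix (Fin n × Fin d) (Fin n × Fin d) ℂ) :=
  {A | SpectrallyClose c z b L g e A ∧ ∀ x ∈ net, A ∈ NearlyBounded (tensLeft d x) K R}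

lemma measurableSet_regularSet (n d : ℕ) (c z b L g e K R : ℝ) (net : Finset (Fin n → ℂ)) :
    MeasurableSet (regularSet n d c z b L g e K R net) := by
  have h : regularSet n d c z b L g e K R net =
      (⋂ v, {A | qf A v ≤ b * nsq v}) ∩ ResolventBounded (Fin n × Fin d) z L (g * (n * d : ℕ)) ∩
      {A | A.trace.re ≤ (c + e) * (n * d : ℕ)} ∩
      {A | (c + c ^ 2 - e) * (n * d : ℕ) ≤ (A * A).trace.re} ∩
      ⋂ x ∈ net, NearlyBounded (tensLeft d x) K R := by
    ext A
    simp only [regularSet, Set.mem_inter_iff, Set.mem_iInter, Set.mem_ofPred_eq]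
    exact ⟨fun ⟨⟨h1, h2, h3, h4⟩, h5⟩ => ⟨⟨⟨⟨h1, h2⟩, h3⟩, h4⟩, h5⟩,
      fun ⟨⟨⟨⟨h1, h2⟩, h3⟩, h4⟩, h5⟩ => ⟨⟨h1, h2, h3, h4⟩, h5⟩⟩
  rw [h]
  refine MeasurableSet.inter (MeasurableSet.inter (MeasurableSet.inter (MeasurableSet.inter ?_
    (measurableSet_resolventBounded _ _ _)) ?_) ?_) ?_
  · exact (isClosed_iInter fun v => isClosed_le (continuous_qf v) continuous_const).measurableSet
  · exact (isClosed_le continuous_trace_re continuous_const).measurableSet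
  · exact (isClosed_le continuous_const (continuous_trace_re.comp
      (continuous_id.mul continuous_id))).measurableSet
  · exact Finset.measurableSet_biInter _ fun x _ => measurableSet_nearlyBounded _ _ _

lemma notMem_SEP_of_mem_regularSet {n d : ℕ} {c z b L g e K R ε ρ : ℝ} {net : Finset (Fin n → ℂ)}
    {A : Matrix (Fin n × Fin d) (Fin n × Fin d) ℂ} (hA : A.PosSemidef)
    (hreg : A ∈ regularSet n d c z b L g e K R net) (hN : 0 < n * d) (hb : 0 ≤ b) (hε : 0 < ε)
    (hε1 : ε ≤ 1) (hK : 0 ≤ K) (hunit : ∀ x ∈ net, nsq x = 1)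
    (hnet : ∀ a, nsq a = 1 → ∃ x ∈ net, nsq (a - x) ≤ ε ^ 2) (hR : R ≤ ρ * (n * d : ℕ))
    (hlt : (K + 3 * ε * b) * (c + e) + b * n * (net.card * ρ) < c + c ^ 2 - e) :
    A ∉ SEP n d := by
  intro hsep
  obtain ⟨⟨hqf, -, htr, htr2⟩, hgood⟩ := hreg
  have h1 := trace_sq_le_of_mem_SEP hA hsep hb hqf hε hε1 hunit hnet hgood
  have hN' : (0 : ℝ) < (n * d : ℕ) := by exact_mod_cast hN
  have h2 : (K + 3 * ε * b) * A.trace.re ≤ (K + 3 * ε * b) * ((c + e) * (n * d : ℕ)) := by gcongr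
  have h3 : b * n * (net.card * R) ≤ b * n * (net.card * (ρ * (n * d : ℕ))) := by gcongr
  have h4 := mul_lt_mul_of_pos_right hlt hN'
  linarith

lemma eventually_measure_not_nearlyBounded_le {Ω : Type*} [MeasurableSpace Ω] (ℙ : Measure Ω)
    [IsProbabilityMeasure ℙ] {n : ℕ} (hn : 2 ≤ n)
    {X : (d : ℕ) → Ω → Matrix (Fin n × Fin d) (Fin n × Fin d) ℂ} (hX : ∀ d, Measurable (X d))
    (hinv : UnitInv ℙ n X) {z L g ε : ℝ} (hL : 0 < L) (hg : 0 < g) (hε : 0 < ε) (hε1 : ε < 1) :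
    ∀ᶠ d : ℕ in atTop, ∀ x : Fin n → ℂ, nsq x = 1 →
      ℙ {ω | X d ω ∈ ResolventBounded (Fin n × Fin d) z L (g * (1 + ε) * (n * d : ℕ)) ∧
        X d ω ∉ NearlyBounded (tensLeft d x)
          (z - (1 - ε) ^ 2 * (1 - 1 / n) / (g * (1 + 2 * ε)))
          ((g * (1 + 2 * ε) * (n * d : ℕ) - L) / L ^ 2)} ≤
      ENNReal.ofReal (Real.exp (-(ε / 2)) ^ d) := by
  set γ := g * (1 + 2 * ε) with hγ
  have hγ0 : 0 < γ := by positivity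
  set M := 8 * L ^ 2 / ε ^ 3 with hM
  have hn0 : (0 : ℝ) < n := by positivity
  have hn1 : (1 : ℝ) ≤ n := by exact_mod_cast (by omega : 1 ≤ n)
  have hbig : Tendsto (fun d : ℕ => ((n * d : ℕ) : ℝ)) atTop atTop :=
    tendsto_natCast_atTop_atTop.comp
      (tendsto_id.const_mul_atTop' (by omega : 0 < n))
  filter_upwards [eventually_gt_atTop 0, hbig.eventually_ge_atTop (2 * L / γ),
    hbig.eventually_ge_atTop ((2 * M / γ + L) / (g * ε))] with d hd hd1 hd2 x hx
  have hN : (0 : ℝ) < (n * d : ℕ) := by exact_mod_cast Nat.mul_pos (by omega) hd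
  have hd0 : (0 : ℝ) < d := by exact_mod_cast hd
  set N : ℝ := ((n * d : ℕ) : ℝ) with hNdef
  have hNnd : N = n * d := by rw [hNdef, Nat.cast_mul]
  set δ := (1 - ε) / (γ * N) with hδ
  have hδ0 : 0 ≤ δ := div_nonneg (by linarith) (by positivity)
  have hδL : δ * L ≤ 1 / 2 := by
    rw [div_le_iff₀ hγ0] at hd1
    rw [hδ, div_mul_eq_mul_div, div_le_iff₀ (by positivity)]
    nlinarith
  have hm : (((n - 1) * d : ℕ) : ℝ) = (n - 1) * d := by
    rw [Nat.cast_mul, Nat.cast_sub (by omega), Nat.cast_one]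
  have hmδ : (((n - 1) * d : ℕ) : ℝ) * δ = (1 - ε) * (1 - 1 / n) / γ := by
    rw [hm, hδ, hNnd]
    field_simp
  have hmδ1 : (((n - 1) * d : ℕ) : ℝ) * δ ≤ 1 / γ := by
    rw [hmδ]
    gcongr
    have : 0 ≤ 1 / (n : ℝ) := by positivity
    have : 1 / (n : ℝ) ≤ 1 := by rw [div_le_one hn0]; exact hn1
    nlinarith
  have hmain := measure_resolventBounded_diff_nearlyBounded_le ℙ (hX d) (hinv d) (z := z) (L := L)
    (δ := δ) (S := γ * N - L) (M := M) (ε := ε) (p := ε / 4) (η := ε) (G := g * (1 + ε) * N)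
    (m := (n - 1) * d) hL hδ0 (by linarith) hε (by positivity) (by positivity)
    (by rw [sub_add_cancel, hδ, div_mul_cancel₀ _ (by positivity)])
    (by rw [hM]; apply le_of_eq; field_simp; norm_num)
    (φ := ⟨fun y : Fin d => ((⟨0, by omega⟩ : Fin n), y), fun y y' h => (Prod.ext_iff.1 h).2⟩)
    (by
      rw [Fintype.card_prod, Fintype.card_fin, Fintype.card_fin]
      obtain ⟨k, rfl⟩ : ∃ k, n = k + 1 := ⟨n - 1, by omega⟩
      rw [Nat.add_sub_cancel]
      exact le_of_eq (by ring))
    (tensLeft_isometry (d := d) hx)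
    (by
      have h1 : (((n - 1) * d : ℕ) : ℝ) * (δ * M / (1 - δ * L)) ≤ 2 * M / γ := by
        have h2 : (((n - 1) * d : ℕ) : ℝ) * (δ * M / (1 - δ * L))
            = (((n - 1) * d : ℕ) : ℝ) * δ * M / (1 - δ * L) := by ring
        rw [h2, div_le_iff₀ (by linarith)]
        have h3 : (((n - 1) * d : ℕ) : ℝ) * δ * M ≤ 1 / γ * M := by gcongr
        have h4 : 1 / γ * M ≤ 2 * M / γ * (1 - δ * L) := by
          have h5 : 0 ≤ M / γ := by positivity
          rw [show 1 / γ * M = M / γ by ring, show 2 * M / γ = 2 * (M / γ) by ring]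
          nlinarith
        exact h3.trans h4
      rw [div_le_iff₀ (by positivity)] at hd2
      rw [hγ]
      rw [hγ] at h1 hd2
      nlinarith)
  have hK : (1 - ε) * (((n - 1) * d : ℕ) : ℝ) * δ = (1 - ε) ^ 2 * (1 - 1 / n) / γ := by
    rw [mul_assoc, hmδ]; ring
  rw [hK] at hmain
  refine hmain.trans (ENNReal.ofReal_le_ofReal ?_)
  rw [← Real.exp_nat_mul]
  refine Real.exp_le_exp.2 ?_
  have h2n : (2 : ℝ) ≤ n := by exact_mod_cast hn
  rw [hm]
  nlinarith [mul_nonneg (mul_nonneg hε.le hd0.le) (sub_nonneg.2 h2n)]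

lemma ae_eventually_nearlyBounded {Ω : Type*} [MeasurableSpace Ω] (ℙ : Measure Ω)
    [IsProbabilityMeasure ℙ] {n : ℕ} (hn : 2 ≤ n)
    {X : (d : ℕ) → Ω → Matrix (Fin n × Fin d) (Fin n × Fin d) ℂ} (hX : ∀ d, Measurable (X d))
    (hinv : UnitInv ℙ n X) {z L g ε : ℝ} (hL : 0 < L) (hg : 0 < g) (hε : 0 < ε) (hε1 : ε < 1)
    {net : Finset (Fin n → ℂ)} (hunit : ∀ x ∈ net, nsq x = 1) :
    ∀ᵐ ω ∂ℙ, ∀ᶠ d : ℕ in atTop, ∀ x ∈ net,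
      X d ω ∈ ResolventBounded (Fin n × Fin d) z L (g * (1 + ε) * (n * d : ℕ)) →
      X d ω ∈ NearlyBounded (tensLeft d x) (z - (1 - ε) ^ 2 * (1 - 1 / n) / (g * (1 + 2 * ε)))
        ((g * (1 + 2 * ε) * (n * d : ℕ) - L) / L ^ 2) := by
  obtain ⟨d₀, hd₀⟩ := eventually_atTop.1
    (eventually_measure_not_nearlyBounded_le ℙ hn hX hinv (z := z) hL hg hε hε1)
  have hsingle : ∀ x ∈ net, ∀ᵐ ω ∂ℙ, ∀ᶠ d : ℕ in atTop,
      X d ω ∈ ResolventBounded (Fin n × Fin d) z L (g * (1 + ε) * (n * d : ℕ)) →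
      X d ω ∈ NearlyBounded (tensLeft d x) (z - (1 - ε) ^ 2 * (1 - 1 / n) / (g * (1 + 2 * ε)))
        ((g * (1 + 2 * ε) * (n * d : ℕ) - L) / L ^ 2) := fun x hx => by
    have hr : Real.exp (-(ε / 2)) < 1 := Real.exp_lt_one_iff.2 (by linarith)
    have hsum : Summable fun k : ℕ => Real.exp (-(ε / 2)) ^ (k + d₀) :=
      (summable_nat_add_iff d₀).2 (summable_geometric_of_lt_one (Real.exp_pos _).le hr)
    have hfin := ne_top_of_le_ne_top hsum.tsum_ofReal_ne_top
      (ENNReal.tsum_le_tsum fun k : ℕ => hd₀ (k + d₀) (Nat.le_add_left _ _) x (hunit x hx))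
    filter_upwards [ae_eventually_notMem hfin] with ω hω
    rw [← map_add_atTop_eq_nat d₀, eventually_map]
    filter_upwards [hω] with k hk h
    by_contra h'
    exact hk ⟨h, h'⟩
  have := (ae_ball_iff net.countable_toSet).2 hsingle
  filter_upwards [this] with ω hω
  exact (eventually_all_finset net).2 hω

end Asymptotics

section Threshold

lemma exists_spectral_parameters {n : ℕ} (hn : 2 ≤ n) {c : ℝ} (hc : 0 < c)
    (hcond : c < ((n : ℝ) - 1) ^ 2 / (4 * n)) :
    ∃ z b g ε ε' : ℝ, (1 + √c) ^ 2 < b ∧ b < z ∧ 0 < g ∧ 0 < ε ∧ ε < 1 ∧ 0 < ε' ∧ ε' ≤ 1 ∧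
      ∫ x, (z - x)⁻¹ ∂(MP c) < g * (1 + ε) ∧
      0 ≤ z - (1 - ε) ^ 2 * (1 - 1 / n) / (g * (1 + 2 * ε)) ∧
      z - (1 - ε) ^ 2 * (1 - 1 / n) / (g * (1 + 2 * ε)) + 3 * ε' * b < 1 + c := by
  have hn0 : (0 : ℝ) < n := by positivity
  have hn1 : (1 : ℝ) < n := by exact_mod_cast (by omega : 1 < n)
  obtain ⟨s, hs⟩ : ∃ s, s = √c := ⟨_, rfl⟩
  obtain ⟨t, ht⟩ : ∃ t, t = √(n : ℝ) := ⟨_, rfl⟩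
  have hs0 : 0 < s := hs ▸ Real.sqrt_pos.2 hc
  have hs2 : c = s ^ 2 := by rw [hs, Real.sq_sqrt hc.le]
  have ht2 : (n : ℝ) = t ^ 2 := by rw [ht, Real.sq_sqrt hn0.le]
  have ht1 : 1 < t := by rw [ht]; exact Real.lt_sqrt_of_sq_lt (by simpa using hn1)
  have ht0 : 0 < t := by linarith
  have hst : 2 * s * t < t ^ 2 - 1 := by
    rw [hs2, ht2, lt_div_iff₀ (by positivity)] at hcond
    refine lt_of_pow_lt_pow_left₀ 2 (by nlinarith) (by nlinarith)
  have hinv := integral_inv_sub_MP hc ht1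
  rw [← hs] at hinv ⊢
  obtain ⟨z, hz⟩ : ∃ z, z = (1 + s * t) * (1 + s / t) := ⟨_, rfl⟩
  have hg : 0 < (1 + s * t)⁻¹ := by positivity
  have hzb : (1 + s) ^ 2 < z := by
    have : z - (1 + s) ^ 2 = s * (t - 1) ^ 2 / t := by rw [hz]; field_simp; ring
    have : 0 < s * (t - 1) ^ 2 / t := by
      have : 0 < t - 1 := by linarith
      positivity
    linarith
  have hK0 : z - (1 - 1 / n) / (1 + s * t)⁻¹ = (1 + s * t) ^ 2 / t ^ 2 := by
    rw [hz, ht2]; field_simp; ring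
  have hK0lt : (1 + s * t) ^ 2 / t ^ 2 < 1 + c := by
    rw [hs2, div_lt_iff₀ (by positivity)]
    nlinarith
  have hlim : Tendsto (fun ε : ℝ =>
      z - (1 - ε) ^ 2 * (1 - 1 / n) / ((1 + s * t)⁻¹ * (1 + 2 * ε))) (𝓝[>] 0)
      (𝓝 ((1 + s * t) ^ 2 / t ^ 2)) := by
    have hcont : ContinuousAt (fun ε : ℝ =>
        z - (1 - ε) ^ 2 * (1 - 1 / n) / ((1 + s * t)⁻¹ * (1 + 2 * ε))) 0 := by
      refine ContinuousAt.sub continuousAt_const (ContinuousAt.div (by fun_prop) (by fun_prop) ?_)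
      simpa using hg.ne'
    have h := hcont.tendsto.mono_left (nhdsWithin_le_nhds (s := Set.Ioi 0))
    have h0 : z - (1 - (0 : ℝ)) ^ 2 * (1 - 1 / n) / ((1 + s * t)⁻¹ * (1 + 2 * 0))
        = (1 + s * t) ^ 2 / t ^ 2 := by rw [← hK0]; norm_num
    rwa [h0] at h
  obtain ⟨ε, ⟨hεlt, hε0, hε1⟩⟩ := ((hlim.eventually_lt_const hK0lt).and
    (Ioo_mem_nhdsGT (zero_lt_one' ℝ))).exists
  obtain ⟨K, hK⟩ : ∃ K, K = z - (1 - ε) ^ 2 * (1 - 1 / n) / ((1 + s * t)⁻¹ * (1 + 2 * ε)) :=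
    ⟨_, rfl⟩
  have hK_nonneg : 0 ≤ K := by
    have h1 : (1 - ε) ^ 2 * (1 - 1 / n) / ((1 + s * t)⁻¹ * (1 + 2 * ε))
        ≤ (1 - 1 / n) / (1 + s * t)⁻¹ := by
      have h2 : 0 ≤ (1 - 1 / n : ℝ) := by
        rw [sub_nonneg, div_le_one hn0]; exact hn1.le
      refine div_le_div₀ h2 ?_ hg ?_
      · exact mul_le_of_le_one_left h2 (by nlinarith)
      · exact le_mul_of_one_le_right hg.le (by linarith)
    have h3 : 0 ≤ (1 + s * t) ^ 2 / t ^ 2 := by positivity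
    linarith
  rw [← hK] at hεlt
  obtain ⟨b, hb1, hb2⟩ := exists_between hzb
  have hb0 : 0 < b := lt_trans (by positivity) hb1
  refine ⟨z, b, (1 + s * t)⁻¹, ε, min 1 ((1 + c - K) / (6 * b)), hb1, hb2, hg, hε0, hε1,
    lt_min one_pos (div_pos (by linarith) (by positivity)), min_le_left _ _, ?_, ?_, ?_⟩
  · rw [hz, hinv]
    exact lt_mul_of_one_lt_right hg (by linarith)
  · rw [← hK]; exact hK_nonneg
  · rw [← hK]
    have h := min_le_right 1 ((1 + c - K) / (6 * b))
    rw [le_div_iff₀ (by positivity)] at h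
    linarith

lemma exists_error_parameters {c b K γ ℓ κ : ℝ} (hc : 0 < c) (hK : 0 ≤ K) (hKc : K < 1 + c) :
    ∃ e L : ℝ, 0 < e ∧ 0 < L ∧ ℓ ≤ L ∧
      K * (c + e) + b * (κ * (γ / L ^ 2)) < c + c ^ 2 - e := by
  obtain ⟨e, he⟩ : ∃ e, e = c * (1 + c - K) / (K + 3) := ⟨_, rfl⟩
  have he0 : 0 < e := by
    have : 0 < 1 + c - K := by linarith
    rw [he]; positivity
  have he1 : e * (K + 3) = c * (1 + c - K) := by
    rw [he, div_mul_cancel₀ _ (by positivity)]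
  have hlim : Tendsto (fun L : ℝ => b * (κ * (γ / L ^ 2))) atTop (𝓝 0) := by
    have h := (((tendsto_const_nhds (x := γ)).div_atTop
      (tendsto_pow_atTop (α := ℝ) two_ne_zero)).const_mul κ).const_mul b
    simpa using h
  obtain ⟨L, hL, hL0, hL1⟩ := ((hlim.eventually_lt_const he0).and
    ((eventually_gt_atTop 0).and (eventually_ge_atTop ℓ))).exists
  exact ⟨e, L, he0, hL0, hL1, by nlinarith⟩

end Threshold

/-- if `c < (n−1)²/(4n)`, a unitarily invariant sequence of random PSD
matrices converging strongly to `MP_c` is asymptotically entangled. -/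
theorem stmt7
    {Ω : Type*} [MeasurableSpace Ω] (ℙ : Measure Ω) [IsProbabilityMeasure ℙ]
    (n : ℕ) (hn : 2 ≤ n) (c : ℝ) (hc : 0 < c)
    (X : (d : ℕ) → Ω → Matrix (Fin n × Fin d) (Fin n × Fin d) ℂ)
    (hmeas : ∀ d, Measurable (X d))
    (hpsd : ∀ d ω, (X d ω).PosSemidef)
    (hUI : UnitInv ℙ n X)
    (hconv : StrongConv ℙ n X (MP c))
    (hcond : c < ((n : ℝ) - 1) ^ 2 / (4 * n)) :
    (∀ᵐ ω ∂ℙ, ∀ᶠ d : ℕ in atTop, X d ω ∉ SEP n d) ∧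
      Tendsto (fun d : ℕ => ℙ {ω | X d ω ∈ SEP n d}) atTop (𝓝 0) := by
  obtain ⟨z, b, g, ε, ε', hb, hbz, hg, hε, hε1, hε', hε'1, hintegral, hK, hKc⟩ :=
    exists_spectral_parameters hn hc hcond
  have hb0 : 0 ≤ b := (sq_nonneg _).trans hb.le
  obtain ⟨net, hunit, hnet⟩ := exists_finite_net n hε'
  obtain ⟨e, L, he, hL, hzL, hlt⟩ := exists_error_parameters (b := b) (γ := g * (1 + 2 * ε))
    (ℓ := (z - b)⁻¹) (κ := n * net.card) hc (add_nonneg hK (by positivity)) hKc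
  let S : (d : ℕ) → Set (Matrix (Fin n × Fin d) (Fin n × Fin d) ℂ) := fun d =>
    regularSet n d c z b L (g * (1 + ε)) e
      (z - (1 - ε) ^ 2 * (1 - 1 / n) / (g * (1 + 2 * ε)))
      ((g * (1 + 2 * ε) * (n * d : ℕ) - L) / L ^ 2) net
  have hreg : ∀ᵐ ω ∂ℙ, ∀ᶠ d : ℕ in atTop, X d ω ∈ S d := by
    filter_upwards [hconv, ae_eventually_nearlyBounded ℙ hn hmeas hUI hL hg hε hε1 hunit]
      with ω hω hω'
    filter_upwards [hω', eventually_spectrallyClose (A := fun d => X d ω) (by omega) hc hb hbz hzL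
      hintegral he (fun d => hpsd d ω) hω] with d hd hclose
    exact ⟨hclose, fun x hx => hd x hx hclose.resolvent⟩
  have hent : ∀ d, 0 < d → ∀ ω, X d ω ∈ S d → X d ω ∉ SEP n d := fun d hd ω hω => by
    refine notMem_SEP_of_mem_regularSet (ρ := g * (1 + 2 * ε) / L ^ 2) (hpsd d ω) hω
      (Nat.mul_pos (by omega) hd) hb0 hε' hε'1 hK hunit hnet ?_ (lt_of_eq_of_lt (by ring) hlt)
    rw [div_mul_eq_mul_div]
    gcongr
    linarith
  constructor
  · filter_upwards [hreg] with ω hω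
    filter_upwards [hω, eventually_gt_atTop 0] with d hd hd0 using hent d hd0 ω hd
  · have hlim : Tendsto (fun d => ℙ {ω | X d ω ∉ S d}) atTop (𝓝 (ℙ ∅)) := by
      refine tendsto_measure_of_ae_tendsto_indicator_of_isFiniteMeasure atTop MeasurableSet.empty
        (fun d => (hmeas d (measurableSet_regularSet ..)).compl) ?_
      filter_upwards [hreg] with ω hω
      filter_upwards [hω] with d hd
      simpa using hd
    rw [measure_empty] at hlim
    refine tendsto_of_tendsto_of_tendsto_of_le_of_le' tendsto_const_nhds hlim
      (Eventually.of_forall fun d => zero_le) ?_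
    filter_upwards [eventually_gt_atTop 0] with d hd
    exact measure_mono fun ω hω hω' => hent d hd ω hω' hω
end
end

section
/- Let n ≥ 2 be fixed and let α > 0 satisfy α < 1/√5 if n = 2, and α < n/√(n⁴ + 2n³ − 2n) if n ≥ 3. Let (Y_d)_{d≥1} be a unitarily invariant sequence of random self-adjoint matrices Y_d ∈ M_n(ℂ) ⊗ M_d(ℂ) converging strongly to the semicircular distribution SC_{2,α} (for instance Y_d = 2·I_{nd} + α·X_d with X_d a standard GUE matrix). Then almost surely, for all sufficiently large d, Y_d ∈ SEP_{n,d}; in particular lim_{d→∞} P(Y_d ∈ SEP_{n,d}) = 1. -/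
open MeasureTheory Filter Topology Polynomial Matrix Kronecker
open scoped ComplexOrder

noncomputable section

/-- The semicircular distribution `SC_{m,σ}` with mean `m` and variance `σ²`:
density `√(4σ² − (x−m)²)/(2πσ²)` on `[m−2σ, m+2σ]`. -/
def SC (m σ : ℝ) : Measure ℝ :=
  MeasureTheory.volume.withDensity (fun x => ENNReal.ofReal
    (Set.indicator (Set.Icc (m - 2 * σ) (m + 2 * σ))
      (fun y => Real.sqrt (4 * σ ^ 2 - (y - m) ^ 2) / (2 * Real.pi * σ ^ 2)) x))

/-- An invertible contraction is the mean of two unitaries, by polar decomposition. -/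
lemma exists_unitary_half_add_of_isUnit {A : Type*} [CStarAlgebra A] {b : A} (hb : IsUnit b)
    (hb1 : ‖b‖ ≤ 1) :
    ∃ u ∈ unitary A, ∃ v ∈ unitary A, b = (2⁻¹ : ℝ) • (u + v) := by
  let _ := CStarAlgebra.spectralOrder A
  let _ := CStarAlgebra.spectralOrderedRing A
  set h : A := CFC.abs b with hh
  have hsa : IsSelfAdjoint h := (CFC.abs_nonneg b).isSelfAdjoint
  have hmul : h * h = star b * b := CFC.abs_mul_abs b
  have hunit : IsUnit h := by
    have : IsUnit (h * h) := hmul ▸ hb.star.mul hb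
    exact ((Commute.refl h).isUnit_mul_iff.1 this).1
  obtain ⟨k, hk⟩ := hunit
  have hnorm : ‖h‖ ≤ 1 := by rw [hh, CFC.norm_abs]; exact hb1
  have hksa : star (↑k⁻¹ : A) = ↑k⁻¹ := by
    have : star k = k := Units.ext (by simpa [hk] using hsa.star_eq)
    rw [← Units.coe_star, star_inv, this]
  have hw : b * (↑k⁻¹ : A) ∈ unitary A := by
    have h1 : star (b * (↑k⁻¹ : A)) * (b * ↑k⁻¹) = 1 := by
      rw [star_mul, hksa]
      calc (↑k⁻¹ : A) * star b * (b * ↑k⁻¹) = ↑k⁻¹ * (star b * b) * ↑k⁻¹ := by noncomm_ring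
        _ = ↑k⁻¹ * (↑k * ↑k) * ↑k⁻¹ := by rw [← hmul, hk]
        _ = 1 := by simp
    have h2 : IsUnit (b * (↑k⁻¹ : A)) := hb.mul k⁻¹.isUnit
    exact ⟨h1, by
      obtain ⟨x, hx⟩ := h2
      rw [← hx] at h1 ⊢
      rw [Units.mul_eq_one_iff_eq_inv.1 h1]
      simp⟩
  let a : selfAdjoint A := ⟨h, hsa⟩
  let u := selfAdjoint.unitarySelfAddISMul a hnorm
  refine ⟨_, mul_mem hw u.2, _, mul_mem hw (star u).2, ?_⟩
  have : (u : A) + (star u : unitary A) = (2 : ℝ) • h := by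
    have e := selfAdjoint.star_coe_unitarySelfAddISMul a hnorm
    rw [Unitary.coe_star, e, two_smul]
    change h + Complex.I • CFC.sqrt (1 - h ^ 2) + (h - Complex.I • CFC.sqrt (1 - h ^ 2)) = h + h
    abel
  rw [← mul_add, this, mul_smul_comm, smul_smul, ← hk]
  simp [mul_assoc]

open scoped Matrix.Norms.L2Operator MatrixOrder

lemma l2_opNorm_one_le (d : Type*) [Fintype d] [DecidableEq d] : ‖(1 : Matrix d d ℂ)‖ ≤ 1 := by
  obtain h | h := isEmpty_or_nonempty d
  · simp [Subsingleton.elim (1 : Matrix d d ℂ) 0]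
  · exact CStarRing.norm_one.le

/-- A strict contraction `B` is the mean of four unitaries: apply
`exists_unitary_half_add_of_isUnit` to the invertible perturbations `B - e` and `B + e`. -/
lemma exists_four_unitary_of_norm_lt_one {d : Type*} [Fintype d] [DecidableEq d]
    {B : Matrix d d ℂ} (hB : ‖B‖ < 1) :
    ∃ u : Fin 4 → Matrix d d ℂ, (∀ i, u i ∈ unitary (Matrix d d ℂ)) ∧
      B = (4⁻¹ : ℝ) • ∑ i, u i := by
  have hfin : ((fun x : ℝ => (x : ℂ)) ⁻¹' (spectrum ℂ B) ∪
      (fun x : ℝ => (x : ℂ)) ⁻¹' (spectrum ℂ (-B))).Finite :=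
    (B.finite_spectrum.preimage Complex.ofReal_injective.injOn).union
      ((-B).finite_spectrum.preimage Complex.ofReal_injective.injOn)
  obtain ⟨e, he, hne⟩ := (Set.Ioo_infinite (sub_pos.2 hB)).exists_notMem_finite hfin
  simp only [Set.mem_union, Set.mem_preimage, not_or, spectrum.notMem_iff] at hne
  have hnorm : ‖algebraMap ℂ (Matrix d d ℂ) e‖ ≤ e := by
    refine (norm_algebraMap _ _).trans_le ?_
    rw [Complex.norm_real, Real.norm_of_nonneg he.1.le]
    nlinarith [he.1, l2_opNorm_one_le d]
  obtain ⟨u, hu, v, hv, huv⟩ := exists_unitary_half_add_of_isUnit hne.1.neg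
    (by rw [neg_sub]; linarith [norm_sub_le B (algebraMap ℂ (Matrix d d ℂ) e), he.2])
  obtain ⟨u', hu', v', hv', huv'⟩ := exists_unitary_half_add_of_isUnit hne.2
    (by rw [sub_neg_eq_add]; linarith [norm_add_le (algebraMap ℂ (Matrix d d ℂ) e) B, he.2])
  refine ⟨![u, v, u', v'], fun i => by fin_cases i <;> assumption, ?_⟩
  have : B = (2⁻¹ : ℝ) • (-(algebraMap ℂ (Matrix d d ℂ) e - B) +
      (algebraMap ℂ (Matrix d d ℂ) e - -B)) := by module
  rw [this, huv, huv']
  simp only [Fin.sum_univ_four, cons_val]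
  module

lemma exists_spectral_decomposition_of_unitary {d : Type*} [Fintype d] [DecidableEq d]
    {U : Matrix d d ℂ} (hU : U ∈ unitary (Matrix d d ℂ)) :
    ∃ (s : Finset ℂ) (P : ℂ → Matrix d d ℂ), (∀ z ∈ s, ‖z‖ = 1) ∧ (∀ z, (P z).PosSemidef) ∧
      U = ∑ z ∈ s, z • P z ∧ 1 = ∑ z ∈ s, P z := by
  have hn : IsStarNormal U := ⟨hU.1.trans hU.2.symm⟩
  have hc (f : ℂ → ℂ) : ContinuousOn f (spectrum ℂ U) := U.finite_spectrum.continuousOn f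
  let s := U.finite_spectrum.toFinset
  refine ⟨s, fun z => cfc (fun w : ℂ => if w = z then 1 else 0) U, ?_, ?_, ?_, ?_⟩
  · intro z hz
    have := spectrum.subset_circle_of_unitary hU (U.finite_spectrum.mem_toFinset.1 hz)
    simpa using this
  · intro z
    rw [← nonneg_iff_posSemidef]
    exact cfc_nonneg fun x _ => by split_ifs <;> simp
  · conv_lhs => rw [← cfc_id ℂ U]
    simp_rw [← cfc_smul _ _ _ (hc _)]
    rw [← cfc_sum _ _ _ fun i _ => hc _]
    refine cfc_congr fun x hx => ?_
    simp [s, Finset.sum_apply, hx]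
  · conv_lhs => rw [← cfc_one ℂ U]
    rw [← cfc_sum _ _ _ fun i _ => hc _]
    refine cfc_congr fun x hx => ?_
    simp [s, Finset.sum_apply, hx]

lemma SEP_kronecker {n d : ℕ} {A : Matrix (Fin n) (Fin n) ℂ} {B : Matrix (Fin d) (Fin d) ℂ}
    (hA : A.PosSemidef) (hB : B.PosSemidef) : A ⊗ₖ B ∈ SEP n d :=
  ⟨1, fun _ => A, fun _ => B, fun _ => hA, fun _ => hB, by simp⟩

lemma SEP_zero {n d : ℕ} : (0 : Matrix (Fin n × Fin d) (Fin n × Fin d) ℂ) ∈ SEP n d :=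
  ⟨0, Fin.elim0, Fin.elim0, fun i => i.elim0, fun i => i.elim0, by simp⟩

lemma SEP_add {n d : ℕ} {X Y : Matrix (Fin n × Fin d) (Fin n × Fin d) ℂ}
    (hX : X ∈ SEP n d) (hY : Y ∈ SEP n d) : X + Y ∈ SEP n d := by
  obtain ⟨k, A, B, hA, hB, rfl⟩ := hX
  obtain ⟨l, A', B', hA', hB', rfl⟩ := hY
  refine ⟨k + l, Fin.append A A', Fin.append B B', ?_, ?_, by simp [Fin.sum_univ_add]⟩ <;>
    refine fun i => i.addCases ?_ ?_ <;> simpa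

lemma SEP_sum {n d : ℕ} {ι : Type*} (s : Finset ι)
    {X : ι → Matrix (Fin n × Fin d) (Fin n × Fin d) ℂ} (hX : ∀ i ∈ s, X i ∈ SEP n d) :
    ∑ i ∈ s, X i ∈ SEP n d :=
  Finset.sum_induction X (· ∈ SEP n d) (fun _ _ => SEP_add) SEP_zero hX

lemma SEP_smul {n d : ℕ} {X : Matrix (Fin n × Fin d) (Fin n × Fin d) ℂ} {r : ℝ} (hr : 0 ≤ r)
    (hX : X ∈ SEP n d) : r • X ∈ SEP n d := by
  obtain ⟨k, A, B, hA, hB, rfl⟩ := hX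
  exact ⟨k, fun i => r • A i, B, fun i => (hA i).smul hr, hB,
    by simp [Finset.smul_sum, smul_kronecker]⟩

/-- The block matrix with blocks `c • 1` at positions `(i, i)` and `(j, j)`, `B` at `(i, j)` and
`Bᴴ` at `(j, i)`; overlapping blocks are added up. -/
def pairBlock {n d : ℕ} (c : ℝ) (i j : Fin n) (B : Matrix (Fin d) (Fin d) ℂ) :
    Matrix (Fin n × Fin d) (Fin n × Fin d) ℂ :=
  c • (single i i (1 : ℂ) ⊗ₖ (1 : Matrix (Fin d) (Fin d) ℂ)) +
    c • (single j j (1 : ℂ) ⊗ₖ (1 : Matrix (Fin d) (Fin d) ℂ)) +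
    single i j (1 : ℂ) ⊗ₖ B + single j i (1 : ℂ) ⊗ₖ Bᴴ

lemma kronecker_sum {l m p q ι : Type*} (A : Matrix l m ℂ) (s : Finset ι) (B : ι → Matrix p q ℂ) :
    A ⊗ₖ (∑ i ∈ s, B i) = ∑ i ∈ s, A ⊗ₖ B i := by
  ext
  simp [Matrix.sum_apply, Finset.mul_sum]

lemma vecMulVec_single_single {m n : Type*} [DecidableEq m] [DecidableEq n] (i : m) (j : n)
    (x y : ℂ) : vecMulVec (Pi.single i x) (Pi.single j y) = single i j (x * y) := by
  ext a b
  simp only [vecMulVec_apply, Pi.single_apply, single_apply]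
  split_ifs <;> simp_all

lemma pairBlock_unitary_mem_SEP {n d : ℕ} (i j : Fin n) {U : Matrix (Fin d) (Fin d) ℂ}
    (hU : U ∈ unitary (Matrix (Fin d) (Fin d) ℂ)) : pairBlock 1 i j U ∈ SEP n d := by
  obtain ⟨s, P, hs, hP, hUP, h1⟩ := exists_spectral_decomposition_of_unitary hU
  let w (z : ℂ) : Fin n → ℂ := Pi.single i z + Pi.single j 1
  have key : pairBlock 1 i j U = ∑ z ∈ s, vecMulVec (w z) (star (w z)) ⊗ₖ P z := by
    have hUs : Uᴴ = ∑ z ∈ s, star z • P z := by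
      rw [hUP, conjTranspose_sum]
      exact Finset.sum_congr rfl fun z _ => by rw [conjTranspose_smul, (hP z).isHermitian.eq]
    have hw (z : ℂ) (hz : z ∈ s) : vecMulVec (w z) (star (w z)) =
        single i i 1 + single j j 1 + z • single i j 1 + star z • single j i 1 := by
      have hzz : z * star z = 1 := by
        rw [Complex.star_def, Complex.mul_conj, Complex.normSq_eq_norm_sq, hs z hz]; simp
      simp only [w, star_add, Pi.star_single, star_one, add_vecMulVec, vecMulVec_add,
        vecMulVec_single_single, mul_one, one_mul, hzz, smul_single, smul_eq_mul]
      abel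
    rw [pairBlock, hUs, h1]
    conv_lhs => rw [hUP]
    simp only [one_smul, kronecker_sum, ← Finset.sum_add_distrib]
    refine Finset.sum_congr rfl fun z hz => ?_
    rw [hw z hz]
    simp only [add_kronecker, smul_kronecker, kronecker_smul]
  rw [key]
  exact SEP_sum s fun z _ => SEP_kronecker (posSemidef_vecMulVec_self_star _) (hP z)

lemma pairBlock_mem_SEP {n d : ℕ} (i j : Fin n) {c : ℝ} {B : Matrix (Fin d) (Fin d) ℂ}
    (hB : ‖B‖ < c) : pairBlock c i j B ∈ SEP n d := by
  have hc : 0 < c := (norm_nonneg B).trans_lt hB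
  obtain ⟨u, hu, huB⟩ := exists_four_unitary_of_norm_lt_one (B := c⁻¹ • B) (by
    rw [norm_smul, norm_inv, Real.norm_of_nonneg hc.le, inv_mul_lt_one₀ hc]
    exact hB)
  have hBc : B = (c / 4) • ∑ k, u k := by
    rw [div_eq_mul_inv, mul_smul, ← huB, smul_smul, mul_inv_cancel₀ hc.ne', one_smul]
  have key : pairBlock c i j B = (c / 4) • ∑ k, pairBlock 1 i j (u k) := by
    rw [hBc]
    simp only [pairBlock, conjTranspose_smul, conjTranspose_sum, kronecker_smul, kronecker_sum,
      star_trivial, Finset.sum_add_distrib, smul_add, Finset.sum_const, Finset.card_univ,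
      Fintype.card_fin, one_smul]
    module
  rw [key]
  exact SEP_smul (by positivity) (SEP_sum _ fun k _ => pairBlock_unitary_mem_SEP i j (hu k))

lemma l2_opNorm_one_submatrix_le {m n : Type*} [Fintype m] [Fintype n]
    [DecidableEq m] [DecidableEq n] {f : n → m} (hf : f.Injective) :
    ‖(1 : Matrix m m ℂ).submatrix id f‖ ≤ 1 := by
  have h : ((1 : Matrix m m ℂ).submatrix id f)ᴴ * (1 : Matrix m m ℂ).submatrix id f = 1 := by
    rw [conjTranspose_submatrix, conjTranspose_one,
      ← submatrix_mul _ _ f id f Function.bijective_id, one_mul, submatrix_one _ hf]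
  have h2 := l2_opNorm_conjTranspose_mul_self ((1 : Matrix m m ℂ).submatrix id f)
  rw [h] at h2
  nlinarith [l2_opNorm_one_le n]

lemma l2_opNorm_submatrix_le {m n m' n' : Type*} [Fintype m] [Fintype n] [Fintype m'] [Fintype n']
    [DecidableEq m] [DecidableEq n] [DecidableEq m'] [DecidableEq n']
    (X : Matrix m n ℂ) {f : m' → m} {g : n' → n} (hf : f.Injective) (hg : g.Injective) :
    ‖X.submatrix f g‖ ≤ ‖X‖ := by
  have key : X.submatrix f g =
      ((1 : Matrix m m ℂ).submatrix id f)ᴴ * X * (1 : Matrix n n ℂ).submatrix id g := by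
    ext i j
    simp [Matrix.mul_apply, one_apply]
  have hf' := l2_opNorm_one_submatrix_le hf
  rw [← l2_opNorm_conjTranspose] at hf'
  have hg' := l2_opNorm_one_submatrix_le hg
  rw [key]
  calc _ ≤ ‖((1 : Matrix m m ℂ).submatrix id f)ᴴ * X‖ * ‖(1 : Matrix n n ℂ).submatrix id g‖ :=
        l2_opNorm_mul _ _
    _ ≤ ‖((1 : Matrix m m ℂ).submatrix id f)ᴴ * X‖ := mul_le_of_le_one_right (norm_nonneg _) hg'
    _ ≤ ‖((1 : Matrix m m ℂ).submatrix id f)ᴴ‖ * ‖X‖ := l2_opNorm_mul _ _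
    _ ≤ ‖X‖ := mul_le_of_le_one_left (norm_nonneg _) hf'

/-- A Hermitian matrix within operator-norm distance `c` of `n * c` times the identity is
separable: it is the sum over ordered pairs `(i, j)` of half the pair blocks of its deviation. -/
lemma mem_SEP_of_norm_sub_lt {n d : ℕ} {c : ℝ} {Y : Matrix (Fin n × Fin d) (Fin n × Fin d) ℂ}
    (hY : Y.IsHermitian) (hc : ‖Y - (n * c) • 1‖ < c) : Y ∈ SEP n d := by
  set D := Y - (n * c) • 1 with hD
  let B (i j : Fin n) : Matrix (Fin d) (Fin d) ℂ := D.submatrix (Prod.mk i) (Prod.mk j)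
  have hDh : D.IsHermitian := hY.sub (by simp [IsHermitian])
  have hB (i j : Fin n) : ‖B i j‖ < c :=
    (l2_opNorm_submatrix_le D (Prod.mk_right_injective i) (Prod.mk_right_injective j)).trans_lt hc
  have hBstar (i j : Fin n) : (B i j)ᴴ = B j i := by
    rw [conjTranspose_submatrix, hDh.eq]
  have hsum : ∑ i, ∑ j, single i j (1 : ℂ) ⊗ₖ B i j = D := by
    ext ⟨p, a⟩ ⟨q, b⟩
    simp [Matrix.sum_apply, kroneckerMap_apply, single_apply, B, ite_and]
  have hone : ∑ i : Fin n, single i i (1 : ℂ) ⊗ₖ (1 : Matrix (Fin d) (Fin d) ℂ) = 1 := by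
    ext ⟨p, a⟩ ⟨q, b⟩
    simp [Matrix.sum_apply, kroneckerMap_apply, single_apply, one_apply, ite_and]
    split_ifs <;> rfl
  have key : Y = ∑ i, ∑ j, (2⁻¹ : ℝ) • pairBlock c i j (B i j) := by
    simp only [pairBlock, smul_add, Finset.sum_add_distrib, hBstar, ← Finset.smul_sum,
      Finset.sum_const, Finset.card_univ, Fintype.card_fin, hsum, hone]
    rw [Finset.sum_comm (f := fun i j => single j i (1 : ℂ) ⊗ₖ B j i), hsum, hD]
    module
  rw [key]
  exact SEP_sum _ fun i _ => SEP_sum _ fun j _ =>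
    SEP_smul (by norm_num) (pairBlock_mem_SEP i j (hB i j))

lemma msupport_SC_subset (m σ : ℝ) : msupport (SC m σ) ⊆ Set.Icc (m - 2 * σ) (m + 2 * σ) := by
  intro x hx
  by_contra hmem
  refine (hx _ isClosed_Icc.isOpen_compl hmem).ne' ?_
  rw [SC, withDensity_apply _ measurableSet_Icc.compl]
  refine setLIntegral_eq_zero measurableSet_Icc.compl fun y hy => ?_
  simp [Set.indicator_of_notMem hy]

lemma sSup_abs_sub_SC_le (m : ℝ) {σ : ℝ} (hσ : 0 ≤ σ) :
    sSup ((fun x => |(X - C m : ℝ[X]).eval x|) '' msupport (SC m σ)) ≤ 2 * σ := by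
  refine Real.sSup_le ?_ (by positivity)
  rintro _ ⟨x, hx, rfl⟩
  have := msupport_SC_subset m σ hx
  simp only [eval_sub, eval_X, eval_C]
  rw [abs_le]
  constructor <;> linarith [this.1, this.2]

lemma eventually_norm_sub_lt_of_strongConv {Ω : Type*} [MeasurableSpace Ω] {ℙ : Measure Ω} {n : ℕ}
    {Y : (d : ℕ) → Ω → Matrix (Fin n × Fin d) (Fin n × Fin d) ℂ} {m σ c : ℝ} (hσ : 0 ≤ σ)
    (hc : 2 * σ < c) (hconv : StrongConv ℙ n Y (SC m σ)) :
    ∀ᵐ ω ∂ℙ, ∀ᶠ d : ℕ in atTop, ‖Y d ω - m • 1‖ < c := by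
  filter_upwards [hconv] with ω hω
  filter_upwards [(hω (X - C m)).2.eventually_lt_const ((sSup_abs_sub_SC_le m hσ).trans_lt hc)]
    with d hd
  have h : polyApply (X - C m) (Y d ω) = Y d ω - m • 1 := by
    simp [polyApply, Algebra.algebraMap_eq_smul_one]
  rwa [h] at hd

lemma tendsto_measure_of_ae_eventually_mem {Ω : Type*} [MeasurableSpace Ω] {ℙ : Measure Ω}
    [IsProbabilityMeasure ℙ] {S : ℕ → Set Ω} (hS : ∀ᵐ ω ∂ℙ, ∀ᶠ d in atTop, ω ∈ S d) :
    Tendsto (fun d => ℙ (S d)) atTop (𝓝 1) := by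
  let T (N : ℕ) : Set Ω := {ω | ∀ d ≥ N, ω ∈ S d}
  have hT : Monotone T := fun a b hab ω hω d hd => hω d (hab.trans hd)
  have hU : ℙ (⋃ N, T N) = 1 := by
    rw [← measure_univ (μ := ℙ)]
    refine measure_congr (eventuallyEq_univ.2 ?_)
    filter_upwards [hS] with ω hω
    obtain ⟨N, hN⟩ := eventually_atTop.1 hω
    exact Set.mem_iUnion.2 ⟨N, hN⟩
  have hlim := tendsto_measure_iUnion_atTop (μ := ℙ) hT
  rw [hU] at hlim
  exact tendsto_of_tendsto_of_tendsto_of_le_of_le hlim tendsto_const_nhds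
    (fun N => measure_mono fun ω hω => hω N le_rfl) fun N => prob_le_one

lemma mul_lt_one_of_lt_threshold {n : ℕ} (hn : 2 ≤ n) {α : ℝ} (hα : 0 < α)
    (hα2 : n = 2 → α < 1 / Real.sqrt 5)
    (hα3 : 3 ≤ n → α < (n : ℝ) / Real.sqrt ((n : ℝ) ^ 4 + 2 * (n : ℝ) ^ 3 - 2 * n)) :
    n * α < 1 := by
  obtain rfl | hn3 := hn.eq_or_lt
  · have h := (lt_div_iff₀ (by positivity)).1 (hα2 rfl)
    have h2 : (2 : ℝ) ≤ Real.sqrt 5 := Real.le_sqrt_of_sq_le (by norm_num)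
    push_cast
    nlinarith
  · have hn' : (3 : ℝ) ≤ n := by exact_mod_cast hn3
    have h2 : (n : ℝ) ^ 2 ≤ Real.sqrt ((n : ℝ) ^ 4 + 2 * (n : ℝ) ^ 3 - 2 * n) :=
      Real.le_sqrt_of_sq_le (by nlinarith [mul_self_nonneg ((n : ℝ) ^ 2 - 1)])
    have h := (lt_div_iff₀ (lt_of_lt_of_le (by positivity) h2)).1 (hα3 hn3)
    nlinarith

/-- shifted semicircular ensembles `SC_{2,α}` are asymptotically
separable when `α < 1/√5` (for `n = 2`) or `α < n/√(n⁴+2n³−2n)` (for `n ≥ 3`). -/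
theorem stmt10
    {Ω : Type*} [MeasurableSpace Ω] (ℙ : Measure Ω) [IsProbabilityMeasure ℙ]
    (n : ℕ) (hn : 2 ≤ n) (α : ℝ) (hα : 0 < α)
    (hα2 : n = 2 → α < 1 / Real.sqrt 5)
    (hα3 : 3 ≤ n → α < (n : ℝ) / Real.sqrt ((n : ℝ) ^ 4 + 2 * (n : ℝ) ^ 3 - 2 * n))
    (Y : (d : ℕ) → Ω → Matrix (Fin n × Fin d) (Fin n × Fin d) ℂ)
    (hmeas : ∀ d, Measurable (Y d))
    (hherm : ∀ d ω, (Y d ω).IsHermitian)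
    (hUI : UnitInv ℙ n Y)
    (hconv : StrongConv ℙ n Y (SC 2 α)) :
    (∀ᵐ ω ∂ℙ, ∀ᶠ d : ℕ in atTop, Y d ω ∈ SEP n d) ∧
      Tendsto (fun d : ℕ => ℙ {ω | Y d ω ∈ SEP n d}) atTop (𝓝 1) := by
  have hc : 2 * α < 2 / n := by
    have h := mul_lt_one_of_lt_threshold hn hα hα2 hα3
    rw [lt_div_iff₀ (by positivity)]
    linarith
  have hnn : (n : ℝ) * (2 / n) = 2 := mul_div_cancel₀ _ (by positivity)
  have hae : ∀ᵐ ω ∂ℙ, ∀ᶠ d : ℕ in atTop, Y d ω ∈ SEP n d := by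
    filter_upwards [eventually_norm_sub_lt_of_strongConv hα.le hc hconv] with ω hω
    filter_upwards [hω] with d hd
    exact mem_SEP_of_norm_sub_lt (hherm d ω) (c := 2 / n) (by rwa [hnn])
  exact ⟨hae, tendsto_measure_of_ae_eventually_mem hae⟩
end
end
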